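/- If Y ⊆ ℝ^k is a closed perfect set that is gap-rich (with some discrete exceptional set S ⊆ ℝ), then for generic y ∈ LP(ℤ,Y) (i.e., for every y in some dense Gδ subset of LP(ℤ,Y)), the spectrum of the discrete Schrödinger operator H_y is a Cantor set of zero Hausdorff dimension. -/

import Mathlib

/-!
For each `n`, let `U n` be the set of `y ∈ LP(ℤ,Y)` for which the spectrum of `H_y` is covered by
finitely many open intervals whose lengths `ℓ` satisfy `∑ ℓ ^ (1 / (n + 1)) < 1 / (n + 1)`.  The
generic set is `⋂ n, U n`.

*`U n` is open* (`covers_stable`): the spectrum is compact and moves by at most the sup-distance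
of the potentials.

*`U n` is dense* (`exists_covers_near`): fix a periodic sequence.  Gap-richness and compactness
give finitely many periodic sequences near it whose gaps contain every relevant energy outside a
small neighbourhood of `S`.  They are pasted together in long blocks (`exists_paste`).  At an
energy in a gap of the `i`-th sequence, an approximate eigenfunction of the pasted operator is
exponentially small in the middle of each copy of the `i`-th block (`window_decay`), so cutting
the line there costs almost nothing: the energy is exponentially close to one of the `p`
eigenvalues of the Dirichlet operator on one period (`spectrum_near_eigenvalue`).  Since `p` is
only linear in the block length, long blocks give thin spectra (`exists_large_block`).

By Baire's theorem `⋂ n, U n` is a dense `Gδ`, and on it the spectrum has Hausdorff dimension zero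
(`dimH_eq_zero_of_covers`), hence empty interior.  The spectrum of a limit-periodic operator never
has isolated points (`preperfect_spectrum`): at an isolated point `E`, the operator `H - E` would be
bounded below on the orthogonal complement of its kernel, which is at most two-dimensional, and
three disjoint translates by almost periods of one approximate eigenvector contradict this.

Throughout, spectra are handled through lower bounds: a bounded symmetric operator is bijective if
and only if it is bounded below (`notMem_spectrum_iff`), and the best lower bound of `H - E` is the
distance from `E` to the spectrum (`expandsBy_of_spectrum_dist`).
-/

open Set MeasureTheory BoundedContinuousFunction

noncomputable section

/-- ℓ²(ℤ; ℝ). -/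
abbrev Ell2 : Type := lp (fun _ : ℤ => ℝ) 2

/-- Spectrum of the discrete Schrödinger operator `H_W = Δ + W` on `ℓ²(ℤ)`:
`E` lies in the spectrum iff `H_W - E` is not a linear bijection of `ℓ²(ℤ)`
(for bounded `W`, by the open mapping theorem this is equivalent to `H_W - E`
not being boundedly invertible). -/
def SchrodingerSpectrum (W : ℤ → ℝ) : Set ℝ :=
  {E : ℝ | ¬ ∃ T : Ell2 ≃ₗ[ℝ] Ell2,
      ∀ f : Ell2, ∀ n : ℤ,
        (T f) n = f (n - 1) + f (n + 1) + (W n - E) * f n}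

/-- A Cantor set of zero Hausdorff dimension: nonempty, compact, without isolated
points, with empty interior, and of Hausdorff dimension zero. -/
def IsZeroDimCantor (s : Set ℝ) : Prop :=
  s.Nonempty ∧ IsCompact s ∧ Preperfect s ∧ interior s = ∅ ∧ dimH s = 0

/-- Periodic bounded sequences. -/
def IsPeriodicSeq {α : Type*} [PseudoMetricSpace α] (W : ℤ →ᵇ α) : Prop :=
  ∃ q : ℕ, 0 < q ∧ ∀ n : ℤ, W (n + q) = W n

/-- The limit-periodic functions `ℤ → ℝ`: uniform limits of periodic functions. -/
def LPZ : Set (ℤ →ᵇ ℝ) := closure {W : ℤ →ᵇ ℝ | IsPeriodicSeq W}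

/-- A subset of ℝ is discrete if it has no accumulation points. -/
def IsDiscreteSet (S : Set ℝ) : Prop := ∀ x : ℝ, ¬ AccPt x (Filter.principal S)

/-- Periodic extension `w^{♯ℤ}` of a finite word `w`. -/
def perExt {α : Type*} [Zero α] {m : ℕ} (w : Fin m → α) : ℤ → α :=
  fun n =>
    if h : 0 < m then
      w ⟨(n % (m : ℤ)).toNat, by
        have h1 : 0 ≤ n % (m : ℤ) := Int.emod_nonneg n (by exact_mod_cast h.ne')
        have h2 : n % (m : ℤ) < (m : ℤ) := Int.emod_lt_of_pos n (by exact_mod_cast h)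
        omega⟩
    else 0

/-- Aggregation `y^♮` of a sequence of blocks in `ℝ^k` into a potential `ℤ → ℝ`. -/
def agg (k : ℕ) (x : ℤ → (Fin k → ℝ)) : ℤ → ℝ :=
  fun n =>
    if h : 0 < k then
      x (Int.fdiv n k) ⟨(n % (k : ℤ)).toNat, by
        have h1 : 0 ≤ n % (k : ℤ) := Int.emod_nonneg n (by exact_mod_cast h.ne')
        have h2 : n % (k : ℤ) < (k : ℤ) := Int.emod_lt_of_pos n (by exact_mod_cast h)
        omega⟩
    else 0

/-- `Y ⊆ ℝ^k` is gap-rich with exceptional set `S`: `S` is discrete and near any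
word over `Y` there is a word over `Y` whose periodic Schrödinger operator has a
gap at any prescribed energy `E ∉ S`. -/
def GapRich (k : ℕ) (Y : Set (Fin k → ℝ)) (S : Set ℝ) : Prop :=
  IsDiscreteSet S ∧
  ∀ E : ℝ, E ∉ S → ∀ m : ℕ, 0 < m → ∀ x : Fin m → (Fin k → ℝ), (∀ i, x i ∈ Y) →
    ∀ ε : ℝ, 0 < ε →
      ∃ l : ℕ, 0 < l ∧ ∃ y : Fin l → (Fin k → ℝ),
        (∀ i, y i ∈ Y) ∧
        (∀ j : ℤ, dist (perExt x j) (perExt y j) < ε) ∧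
        E ∉ SchrodingerSpectrum (agg k (perExt y))

/-- The periodic elements of `Y^ℤ`. -/
def PerY (k : ℕ) (Y : Set (Fin k → ℝ)) : Set (ℤ →ᵇ (Fin k → ℝ)) :=
  {x | IsPeriodicSeq x ∧ ∀ n : ℤ, x n ∈ Y}

/-- The limit-periodic elements of `Y^ℤ`: uniform limits of periodic elements. -/
def LPY (k : ℕ) (Y : Set (Fin k → ℝ)) : Set (ℤ →ᵇ (Fin k → ℝ)) := closure (PerY k Y)

/-! ### Symmetric operators bounded below -/

section Abstract

variable {H : Type*} [NormedAddCommGroup H] [InnerProductSpace ℝ H]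

/-- The continuous linear map `T` expands norms by at least the factor `c`. -/
def ExpandsBy (T : H →L[ℝ] H) (c : ℝ) : Prop := ∀ f : H, c * ‖f‖ ≤ ‖T f‖

/-- A symmetric operator that is bounded below is bijective: its range is closed, and dense
because its orthogonal complement is the kernel. -/
lemma bijective_of_expandsBy [CompleteSpace H] {T : H →L[ℝ] H}
    (hT : (T : H →ₗ[ℝ] H).IsSymmetric) {c : ℝ} (hc : 0 < c) (h : ExpandsBy T c) :
    Function.Bijective T := by
  have hanti : AntilipschitzWith (Real.toNNReal c⁻¹) T := by
    refine ContinuousLinearMap.antilipschitz_of_bound T (fun f => ?_)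
    rw [Real.coe_toNNReal _ (by positivity)]
    rw [inv_mul_eq_div, le_div_iff₀ hc, mul_comm]
    exact h f
  refine ⟨hanti.injective, ?_⟩
  have hcl : IsClosed (Set.range T) := hanti.isClosed_range T.uniformContinuous
  have hcl' : IsClosed ((LinearMap.range (T : H →ₗ[ℝ] H) : Submodule ℝ H) : Set H) := by
    rw [LinearMap.coe_range]; exact hcl
  have horth : (LinearMap.range (T : H →ₗ[ℝ] H))ᗮ = ⊥ := by
    rw [hT.orthogonal_range, LinearMap.ker_eq_bot]
    exact hanti.injective
  have : CompleteSpace (LinearMap.range (T : H →ₗ[ℝ] H)) := hcl'.completeSpace_coe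
  rw [Submodule.orthogonal_eq_bot_iff] at horth
  intro y
  have : y ∈ LinearMap.range (T : H →ₗ[ℝ] H) := by rw [horth]; trivial
  simpa using this

/-- The distance from `0` to the spectrum bounds a symmetric operator from below: if every
`T - t` with `|t| < d` is bounded below by some positive constant, then `T` is bounded below
by `d`. -/
lemma expandsBy_of_dist {T : H →L[ℝ] H}
    (hT : (T : H →ₗ[ℝ] H).IsSymmetric) {d : ℝ} (hd : 0 < d)
    (h : ∀ t : ℝ, |t| < d → ∃ c > 0, ∀ f : H, c * ‖f‖ ≤ ‖T f - t • f‖) :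
    ExpandsBy T d := by
  have hTs : ∀ f g : H, inner ℝ (T f) g = inner ℝ f (T g) := fun f g => hT f g
  set A : Set ℝ := {c | 0 ≤ c ∧ c ≤ d ∧ ExpandsBy T c} with hA
  have hA0 : (0 : ℝ) ∈ A := ⟨le_rfl, hd.le, fun f => by simp⟩
  have hAb : BddAbove A := ⟨d, fun c hc => hc.2.1⟩
  set c0 := sSup A with hc0
  have hc00 : 0 ≤ c0 := le_csSup hAb hA0
  have hc0d : c0 ≤ d := csSup_le ⟨0, hA0⟩ fun c hc => hc.2.1
  have hc0B : ExpandsBy T c0 := by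
    intro f
    rcases eq_or_ne f 0 with rfl | hf
    · simp
    have hf' : 0 < ‖f‖ := norm_pos_iff.2 hf
    rw [← le_div_iff₀ hf']
    exact csSup_le ⟨0, hA0⟩ fun c hc => by
      rw [le_div_iff₀ hf']; exact hc.2.2 f
  rcases hc0d.eq_or_lt with heq | hlt
  · rwa [heq] at hc0B
  exfalso
  obtain ⟨a, ha, hau⟩ := h c0 (by rwa [abs_of_nonneg hc00])
  obtain ⟨b, hb, hbu⟩ := h (-c0) (by rwa [abs_neg, abs_of_nonneg hc00])
  -- `P = T² - c0²` is nonnegative, bounded, and bounded below by `a * b`.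
  set P : H →L[ℝ] H := T.comp T - (c0 ^ 2) • ContinuousLinearMap.id ℝ H with hP
  have hPa : ∀ f, P f = T (T f) - (c0 ^ 2) • f := fun f => by simp [hP]
  have hPq : ∀ f, inner ℝ (P f) f = ‖T f‖ ^ 2 - c0 ^ 2 * ‖f‖ ^ 2 := by
    intro f
    rw [hPa, inner_sub_left, hTs, real_inner_self_eq_norm_sq, inner_smul_left,
      real_inner_self_eq_norm_sq]
    simp
  have hPs : ∀ f g : H, inner ℝ (P f) g = inner ℝ f (P g) := by
    intro f g
    rw [hPa, hPa, inner_sub_left, inner_sub_right, hTs, hTs, inner_smul_left, inner_smul_right]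
    simp
  have hP0 : ∀ f, 0 ≤ inner ℝ (P f) f := by
    intro f
    rw [hPq, ← mul_pow, sub_nonneg]
    exact pow_le_pow_left₀ (by positivity) (hc0B f) 2
  have hPb : ∀ f, a * b * ‖f‖ ≤ ‖P f‖ := by
    intro f
    have h1 := hau (T f - (-c0) • f)
    have h2 := hbu f
    have h3 : T (T f - (-c0) • f) - c0 • (T f - (-c0) • f) = P f := by
      rw [hPa, map_sub, map_smul, smul_sub, smul_smul, pow_two]
      simp only [neg_smul, mul_neg]
      abel
    rw [h3] at h1
    nlinarith
  set K := ‖P‖ + 1 with hK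
  have hKpos : 0 < K := by positivity
  have hPK : ∀ f, ‖P f‖ ≤ K * ‖f‖ := fun f =>
    (P.le_opNorm f).trans (by gcongr; simp [hK])
  have hPlow : ∀ f, ‖P f‖ ^ 2 / K ≤ inner ℝ (P f) f := by
    intro f
    have h1 := hP0 (f - K⁻¹ • P f)
    have h2 : inner ℝ (P (f - K⁻¹ • P f)) (f - K⁻¹ • P f)
        = inner ℝ (P f) f - 2 * K⁻¹ * ‖P f‖ ^ 2 + K⁻¹ ^ 2 * inner ℝ (P (P f)) (P f) := by
      rw [map_sub, map_smul, inner_sub_left, inner_sub_right, inner_sub_right]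
      simp only [inner_smul_left, inner_smul_right, real_inner_self_eq_norm_sq]
      rw [hPs (P f) f, real_inner_self_eq_norm_sq]
      simp
      ring
    have h3 : inner ℝ (P (P f)) (P f) ≤ K * ‖P f‖ ^ 2 := by
      refine (real_inner_le_norm _ _).trans ?_
      have := hPK (P f)
      nlinarith [norm_nonneg (P f)]
    have h4 : K⁻¹ ^ 2 * inner ℝ (P (P f)) (P f) ≤ K⁻¹ * ‖P f‖ ^ 2 := by
      calc _ ≤ K⁻¹ ^ 2 * (K * ‖P f‖ ^ 2) := by gcongr
        _ = _ := by field_simp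
    rw [h2] at h1
    rw [div_eq_inv_mul]
    linarith
  set κ := (a * b) ^ 2 / K with hκ
  have hκpos : 0 < κ := by positivity
  have hbig : ∀ f, (c0 ^ 2 + κ) * ‖f‖ ^ 2 ≤ ‖T f‖ ^ 2 := by
    intro f
    have h1 := hPlow f
    rw [hPq] at h1
    have h2 : κ * ‖f‖ ^ 2 ≤ ‖P f‖ ^ 2 / K := by
      rw [hκ, div_mul_eq_mul_div, ← mul_pow]
      gcongr
      exact hPb f
    linarith
  have hlt2 : c0 < Real.sqrt (c0 ^ 2 + κ) := by
    apply Real.lt_sqrt_of_sq_lt; linarith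
  have hmem : min d (Real.sqrt (c0 ^ 2 + κ)) ∈ A := by
    refine ⟨by positivity, min_le_left _ _, fun f => ?_⟩
    calc _ ≤ Real.sqrt (c0 ^ 2 + κ) * ‖f‖ := by gcongr; exact min_le_right _ _
      _ ≤ ‖T f‖ := by
        rw [← pow_le_pow_iff_left₀ (by positivity) (norm_nonneg _) two_ne_zero, mul_pow,
          Real.sq_sqrt (by positivity)]
        exact hbig f
  have := le_csSup hAb hmem
  exact absurd this (not_le.2 (lt_min hlt hlt2))

/-- If `0` is an isolated point of the spectrum, quantified by `‖(T - t) f‖ ≥ |t| ‖f‖` for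
`|t| ≤ r`, then `T` is bounded below on its own range.  Squaring the hypothesis gives
`|⟨T f, f⟩| ≤ ‖T f‖² / (2 r)`, which polarizes to `|⟨T f, g⟩| ≤ ‖T f‖ ‖T g‖ / (2 r)`;
the choice `g = T f` concludes. -/
lemma expands_range {T : H →L[ℝ] H}
    (hT : (T : H →ₗ[ℝ] H).IsSymmetric) {r : ℝ} (hr : 0 < r)
    (h : ∀ t : ℝ, |t| ≤ r → ∀ f : H, |t| * ‖f‖ ≤ ‖T f - t • f‖) (f : H) :
    r * ‖T f‖ ≤ ‖T (T f)‖ := by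
  have hTs : ∀ f g : H, inner ℝ (T f) g = inner ℝ f (T g) := fun f g => hT f g
  have key : ∀ t : ℝ, |t| ≤ r → ∀ f : H, 2 * t * inner ℝ (T f) f ≤ ‖T f‖ ^ 2 := by
    intro t ht f
    have h1 := pow_le_pow_left₀ (by positivity) (h t ht f) 2
    rw [mul_pow, sq_abs, norm_sub_sq_real, inner_smul_right, norm_smul, mul_pow,
      Real.norm_eq_abs, sq_abs] at h1
    linarith
  have key1 := key r (by rw [abs_of_pos hr])
  have key2 := key (-r) (by rw [abs_neg, abs_of_pos hr])
  set u := ‖T f‖ with hu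
  set v := ‖T (T f)‖ with hv
  have pol : ∀ s : ℝ, 4 * r * s * u ^ 2 ≤ u ^ 2 + s ^ 2 * v ^ 2 := by
    intro s
    have a1 := key1 (f + s • T f)
    have a2 := key2 (f - s • T f)
    have e1 : ‖T (f + s • T f)‖ ^ 2 + ‖T (f - s • T f)‖ ^ 2 = 2 * (u ^ 2 + s ^ 2 * v ^ 2) := by
      rw [map_add, map_sub, map_smul, norm_add_sq_real, norm_sub_sq_real, norm_smul, mul_pow,
        Real.norm_eq_abs, sq_abs]
      ring
    have e2 : inner ℝ (T (f + s • T f)) (f + s • T f) - inner ℝ (T (f - s • T f)) (f - s • T f)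
        = 4 * s * u ^ 2 := by
      simp only [map_add, map_sub, map_smul, inner_add_left, inner_add_right, inner_sub_left,
        inner_sub_right, inner_smul_left, inner_smul_right]
      rw [hTs (T f) f, real_inner_self_eq_norm_sq]
      simp
      ring
    nlinarith
  rcases (norm_nonneg (T (T f))).eq_or_lt with hv0 | hv0
  · have hv0' : v = 0 := hv0.symm
    have hu0 : u = 0 := by
      have := pol (1 / (2 * r))
      rw [hv0'] at this
      have h2 : 4 * r * (1 / (2 * r)) = 2 := by field_simp; norm_num
      rw [h2] at this
      have : u ^ 2 ≤ 0 := by linarith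
      exact pow_eq_zero_iff (two_ne_zero) |>.1 (le_antisymm this (sq_nonneg _))
    rw [hu0]; simp [hv0']
  · have := pol (u / v)
    have e : (u / v) ^ 2 * v ^ 2 = u ^ 2 := by
      have : v ≠ 0 := hv0.ne'
      field_simp
    rw [e] at this
    have hu0 : 0 ≤ u := norm_nonneg _
    rcases hu0.eq_or_lt with h0 | h0
    · rw [← h0]; simp; exact hv0.le
    have h3 : 4 * r * (u / v) ≤ 2 := by
      have : 4 * r * (u / v) * u ^ 2 ≤ 2 * u ^ 2 := by linarith
      exact le_of_mul_le_mul_right this (by positivity)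
    have h4 : 4 * r * u ≤ 2 * v := by
      have := mul_le_mul_of_nonneg_right h3 hv0.le
      have hv' : v ≠ 0 := hv0.ne'
      calc 4 * r * u = 4 * r * (u / v) * v := by field_simp
        _ ≤ _ := this
    nlinarith

/-- Bounded below on the range implies bounded below on the orthogonal complement of the
kernel, which is the closure of the range. -/
lemma expands_ker_orthogonal [CompleteSpace H] {T : H →L[ℝ] H}
    (hT : (T : H →ₗ[ℝ] H).IsSymmetric) {r : ℝ}
    (h : ∀ f, r * ‖T f‖ ≤ ‖T (T f)‖) {g : H}
    (hg : g ∈ (LinearMap.ker (T : H →ₗ[ℝ] H))ᗮ) : r * ‖g‖ ≤ ‖T g‖ := by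
  rw [← hT.orthogonal_range, Submodule.orthogonal_orthogonal_eq_closure] at hg
  have hcl : IsClosed {g : H | r * ‖g‖ ≤ ‖T g‖} :=
    isClosed_le (by fun_prop) (by fun_prop)
  have hsub : ((LinearMap.range (T : H →ₗ[ℝ] H) : Submodule ℝ H) : Set H)
      ⊆ {g : H | r * ‖g‖ ≤ ‖T g‖} := by
    rintro _ ⟨f, rfl⟩
    exact h f
  exact closure_minimal hsub hcl hg

end Abstract

/-- A symmetric operator on an `n`-dimensional space has `n` real numbers attached to it
(its eigenvalues) which control all its approximate eigenvalues. -/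
lemma exists_eigenvalues {E : Type*} [NormedAddCommGroup E] [InnerProductSpace ℝ E]
    [FiniteDimensional ℝ E] {n : ℕ} (hn : Module.finrank ℝ E = n) (T : E →ₗ[ℝ] E)
    (hT : T.IsSymmetric) :
    ∃ ev : Fin n → ℝ, ∀ (e η : ℝ), 0 ≤ η → (∀ i, η ≤ (ev i - e) ^ 2) →
      ∀ f : E, η * ‖f‖ ^ 2 ≤ ‖T f - e • f‖ ^ 2 := by
  refine ⟨hT.eigenvalues hn, fun e η _ h f => ?_⟩
  set b := hT.eigenvectorBasis hn
  rw [← b.repr.norm_map f, ← b.repr.norm_map (T f - e • f), EuclideanSpace.norm_sq_eq,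
    EuclideanSpace.norm_sq_eq, Finset.mul_sum]
  refine Finset.sum_le_sum fun i _ => ?_
  rw [map_sub, map_smul]
  have : b.repr (T f) i = hT.eigenvalues hn i * b.repr f i :=
    hT.eigenvectorBasis_apply_self_apply hn f i
  simp only [PiLp.sub_apply, PiLp.smul_apply, this, smul_eq_mul, Real.norm_eq_abs, sq_abs]
  rw [← sub_mul, mul_pow]
  exact mul_le_mul_of_nonneg_right (h i) (sq_nonneg _)

/-! ### The operators on `ℓ²(ℤ)` -/

lemma Ell2.hasSum_sq (f : Ell2) : HasSum (fun n => (f n) ^ 2) (‖f‖ ^ 2) := by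
  have h := lp.hasSum_norm (p := 2) (by norm_num) f
  simpa using h

lemma Ell2.memℓp {g : ℤ → ℝ} (hg : Summable fun n => (g n) ^ 2) :
    Memℓp (E := fun _ : ℤ => ℝ) g 2 := by
  refine memℓp_gen ?_
  simpa using hg

lemma Ell2.norm_le_of_abs_le {f g : Ell2} {c : ℝ} (hc : 0 ≤ c)
    (h : ∀ n, |f n| ≤ c * |g n|) : ‖f‖ ≤ c * ‖g‖ := by
  rw [← pow_le_pow_iff_left₀ (norm_nonneg _) (by positivity) two_ne_zero, mul_pow]
  refine hasSum_le (fun n => ?_) (Ell2.hasSum_sq f) ((Ell2.hasSum_sq g).mul_left (c ^ 2))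
  rw [← sq_abs (f n), ← sq_abs (g n), ← mul_pow]
  exact pow_le_pow_left₀ (abs_nonneg _) (h n) 2

/-- The formal action of the Schrödinger operator with potential `V` on sequences. -/
def jac (V f : ℤ → ℝ) : ℤ → ℝ := fun n => f (n - 1) + f (n + 1) + V n * f n

/-- Boundedness of a potential. -/
def Bdd (V : ℤ → ℝ) : Prop := ∃ C : ℝ, ∀ n, |V n| ≤ C

lemma Bdd.sub_const {V : ℤ → ℝ} (hV : Bdd V) (e : ℝ) : Bdd fun n => V n - e := by
  obtain ⟨C, hC⟩ := hV
  exact ⟨C + |e|, fun n => (abs_sub _ _).trans (by linarith [hC n])⟩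

lemma jac_add (V f g : ℤ → ℝ) : jac V (f + g) = jac V f + jac V g := by
  ext n; simp [jac]; ring

lemma jac_smul (V : ℤ → ℝ) (c : ℝ) (f : ℤ → ℝ) : jac V (c • f) = c • jac V f := by
  ext n; simp [jac]; ring

lemma hasSum_shift {g : ℤ → ℝ} {a : ℝ} (hg : HasSum g a) (c : ℤ) :
    HasSum (fun n => g (n + c)) a :=
  (Equiv.addRight c).hasSum_iff (f := g) |>.2 hg

lemma jac_sq_le {V : ℤ → ℝ} {C : ℝ} (hC : ∀ n, |V n| ≤ C) (f : ℤ → ℝ) (n : ℤ) :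
    (jac V f n) ^ 2 ≤ 3 * (f (n - 1) ^ 2 + f (n + 1) ^ 2 + C ^ 2 * f n ^ 2) := by
  have h1 : (V n * f n) ^ 2 ≤ C ^ 2 * f n ^ 2 := by
    rw [mul_pow, ← sq_abs (V n)]
    exact mul_le_mul_of_nonneg_right (pow_le_pow_left₀ (abs_nonneg _) (hC n) 2) (sq_nonneg _)
  unfold jac
  nlinarith [sq_nonneg (f (n - 1) - f (n + 1)), sq_nonneg (f (n - 1) - V n * f n),
    sq_nonneg (f (n + 1) - V n * f n)]

lemma hasSum_jac_bound {f : ℤ → ℝ} {a : ℝ} (hf : HasSum (fun n => f n ^ 2) a) (C : ℝ) :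
    HasSum (fun n => 3 * (f (n - 1) ^ 2 + f (n + 1) ^ 2 + C ^ 2 * f n ^ 2))
      (3 * (a + a + C ^ 2 * a)) :=
  (((hasSum_shift hf (-1)).add (hasSum_shift hf 1)).add (hf.mul_left _)).mul_left 3

lemma summable_jac {V : ℤ → ℝ} (hV : Bdd V) {f : ℤ → ℝ} (hf : Summable fun n => f n ^ 2) :
    Summable fun n => (jac V f n) ^ 2 := by
  obtain ⟨C, hC⟩ := hV
  exact Summable.of_nonneg_of_le (fun n => sq_nonneg _) (jac_sq_le hC f)
    (hasSum_jac_bound hf.hasSum C).summable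

/-- `jac V` as a linear map of `ℓ²(ℤ)`. -/
def jacLin (V : ℤ → ℝ) (hV : Bdd V) : Ell2 →ₗ[ℝ] Ell2 where
  toFun f := ⟨jac V f, Ell2.memℓp (summable_jac hV (Ell2.hasSum_sq f).summable)⟩
  map_add' f g := Subtype.ext (jac_add V f g)
  map_smul' c f := Subtype.ext (jac_smul V c f)

lemma jacLin_apply (V : ℤ → ℝ) (hV : Bdd V) (f : Ell2) (n : ℤ) :
    jacLin V hV f n = jac V f n := rfl

lemma jacLin_bound (V : ℤ → ℝ) (hV : Bdd V) :
    ∃ K : ℝ, ∀ f, ‖jacLin V hV f‖ ≤ K * ‖f‖ := by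
  obtain ⟨C, hC⟩ := id hV
  refine ⟨Real.sqrt (3 * (1 + 1 + C ^ 2)), fun f => ?_⟩
  rw [← pow_le_pow_iff_left₀ (norm_nonneg _) (by positivity) two_ne_zero, mul_pow,
    Real.sq_sqrt (by positivity)]
  refine (hasSum_le (jac_sq_le hC f) (Ell2.hasSum_sq (jacLin V hV f))
    (hasSum_jac_bound (Ell2.hasSum_sq f) C)).trans (le_of_eq ?_)
  ring

open Classical in
/-- The bounded operator on `ℓ²(ℤ)` acting as `jac V` (zero for an unbounded `V`). -/
def jacOp (V : ℤ → ℝ) : Ell2 →L[ℝ] Ell2 :=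
  if hV : Bdd V then (jacLin V hV).mkContinuousOfExistsBound (jacLin_bound V hV) else 0

lemma jacOp_apply {V : ℤ → ℝ} (hV : Bdd V) (f : Ell2) (n : ℤ) :
    jacOp V f n = f (n - 1) + f (n + 1) + V n * f n := by
  unfold jacOp
  rw [dif_pos hV]
  rfl

lemma jacOp_symm {V : ℤ → ℝ} (hV : Bdd V) :
    ((jacOp V : Ell2 →L[ℝ] Ell2) : Ell2 →ₗ[ℝ] Ell2).IsSymmetric := by
  intro f g
  have hs : ∀ (c : ℤ), Summable fun n => f (n + c) * g n := by
    intro c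
    have h1 := (hasSum_shift (Ell2.hasSum_sq f) c).summable
    have h2 := (Ell2.hasSum_sq g).summable
    refine Summable.of_norm_bounded (h1.add h2) fun n => ?_
    rw [Real.norm_eq_abs, abs_le]
    constructor <;> nlinarith [sq_nonneg (f (n + c) + g n), sq_nonneg (f (n + c) - g n)]
  have h1 := (hs (-1)).hasSum
  have h2 := (hs 1).hasSum
  have hl := lp.hasSum_inner (𝕜 := ℝ) (jacOp V f) g
  have hr := lp.hasSum_inner (𝕜 := ℝ) f (jacOp V g)
  simp only [jacOp_apply hV, RCLike.inner_apply, conj_trivial] at hl hr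
  have e1 := hasSum_shift h1 1
  have e2 := hasSum_shift h2 (-1)
  have hd := ((hl.sub hr).add (e1.sub h1)).add (e2.sub h2)
  have hz := hd.unique (a₂ := 0) (by
    have h0 : HasSum (fun _ : ℤ => (0 : ℝ)) 0 := hasSum_zero
    refine (congrArg (fun F : ℤ → ℝ => HasSum F 0) (funext fun n => ?_)).mpr h0
    simp only [← sub_eq_add_neg, sub_add_cancel, add_sub_cancel_right]
    ring)
  change inner ℝ (jacOp V f) g = inner ℝ f (jacOp V g)
  linarith

lemma norm_jacOp_sub {V V' : ℤ → ℝ} (hV : Bdd V) (hV' : Bdd V') {ε : ℝ}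
    (h : ∀ n, |V n - V' n| ≤ ε) (f : Ell2) : ‖jacOp V f - jacOp V' f‖ ≤ ε * ‖f‖ := by
  refine Ell2.norm_le_of_abs_le ((abs_nonneg _).trans (h 0)) fun n => ?_
  have : (jacOp V f - jacOp V' f) n = (V n - V' n) * f n := by
    change jacOp V f n - jacOp V' f n = _
    rw [jacOp_apply hV, jacOp_apply hV']; ring
  rw [this, abs_mul]
  gcongr
  exact h n

lemma ExpandsBy.perturb {V V' : ℤ → ℝ} (hV : Bdd V) (hV' : Bdd V') {ε d : ℝ}
    (hd : ExpandsBy (jacOp V) d) (h : ∀ n, |V n - V' n| ≤ ε) :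
    ExpandsBy (jacOp V') (d - ε) := by
  intro f
  have h1 := norm_jacOp_sub hV hV' h f
  have h2 := hd f
  have h3 := norm_sub_norm_le (jacOp V f) (jacOp V' f)
  linarith

/-- Away from the spectrum the operator is bounded below, and conversely. -/
lemma notMem_spectrum_iff {W : ℤ → ℝ} (hW : Bdd W) (e : ℝ) :
    e ∉ SchrodingerSpectrum W ↔ ∃ c > 0, ExpandsBy (jacOp fun n => W n - e) c := by
  have hV := hW.sub_const e
  simp only [SchrodingerSpectrum, mem_ofPred_eq, not_not]
  constructor
  · rintro ⟨T, hT⟩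
    have hTe : ∀ f, T f = jacOp (fun n => W n - e) f := fun f => by
      apply lp.ext; funext n; rw [hT, jacOp_apply hV]
    have hbij : Function.Bijective (jacOp fun n => W n - e) := by
      have : (jacOp (fun n => W n - e) : Ell2 → Ell2) = T := by funext f; exact (hTe f).symm
      rw [this]; exact T.bijective
    obtain ⟨K, hK⟩ := ContinuousLinearMap.bijective_iff_dense_range_and_antilipschitz
      (jacOp fun n => W n - e) |>.1 hbij |>.2
    refine ⟨((K : ℝ) + 1)⁻¹, by positivity, fun f => ?_⟩
    have h1 := hK.le_mul_dist f 0
    rw [dist_zero_right, map_zero, dist_zero_right] at h1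
    rw [inv_mul_le_iff₀ (by positivity)]
    nlinarith [norm_nonneg (jacOp (fun n => W n - e) f)]
  · rintro ⟨c, hc, h⟩
    have hb := bijective_of_expandsBy (jacOp_symm hV) hc h
    exact ⟨LinearEquiv.ofBijective (jacOp fun n => W n - e : Ell2 →ₗ[ℝ] Ell2) hb,
      fun f n => jacOp_apply hV f n⟩

/-- The operator `H_W - e` is bounded below by the distance from `e` to the spectrum. -/
lemma expandsBy_of_spectrum_dist {W : ℤ → ℝ} (hW : Bdd W) {e d : ℝ} (hd : 0 < d)
    (h : ∀ t ∈ SchrodingerSpectrum W, d ≤ |t - e|) :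
    ExpandsBy (jacOp fun n => W n - e) d := by
  refine expandsBy_of_dist (jacOp_symm (hW.sub_const e)) hd fun t ht => ?_
  have h1 : e + t ∉ SchrodingerSpectrum W := fun hm => by
    have := h _ hm
    rw [add_sub_cancel_left] at this
    linarith
  obtain ⟨c, hc, hcf⟩ := (notMem_spectrum_iff hW _).1 h1
  refine ⟨c, hc, fun f => ?_⟩
  have h2 : jacOp (fun n => W n - e) f - t • f = jacOp (fun n => W n - (e + t)) f := by
    apply lp.ext
    funext n
    change jacOp (fun n => W n - e) f n - t * f n = _
    rw [jacOp_apply (hW.sub_const _), jacOp_apply (hW.sub_const _)]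
    ring
  rw [h2]; exact hcf f

/-- The spectrum moves by at most the sup-distance of the potentials. -/
lemma exists_spectrum_near {W W' : ℤ → ℝ} (hW : Bdd W) (hW' : Bdd W') {ε δ : ℝ}
    (h : ∀ n, |W n - W' n| ≤ ε) (hδ : ε < δ) {e : ℝ} (he : e ∈ SchrodingerSpectrum W') :
    ∃ t ∈ SchrodingerSpectrum W, |t - e| < δ := by
  by_contra! hcon
  have hε : 0 ≤ ε := (abs_nonneg _).trans (h 0)
  have h1 := expandsBy_of_spectrum_dist hW (hε.trans_lt hδ) hcon
  have h2 := h1.perturb (hW.sub_const e) (hW'.sub_const e) (ε := ε) (fun n => by simpa using h n)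
  exact (notMem_spectrum_iff hW' e).2 ⟨δ - ε, by linarith, h2⟩ he

lemma abs_le_of_mem_spectrum {W : ℤ → ℝ} {C : ℝ} (hC : ∀ n, |W n| ≤ C) {e : ℝ}
    (he : e ∈ SchrodingerSpectrum W) : |e| ≤ C + 2 := by
  by_contra! hcon
  have hW : Bdd W := ⟨C, hC⟩
  refine (notMem_spectrum_iff hW e).2 ⟨|e| - C - 2, by linarith, fun f => ?_⟩ he
  have h0 : Bdd (fun _ => (0 : ℝ)) := ⟨0, by simp⟩
  have hA : ‖jacOp (fun _ => (0 : ℝ)) f‖ ≤ 2 * ‖f‖ := by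
    rw [← pow_le_pow_iff_left₀ (norm_nonneg _) (by positivity) two_ne_zero, mul_pow]
    have hf := Ell2.hasSum_sq f
    have hs := ((hasSum_shift hf (-1)).add (hasSum_shift hf 1)).mul_left 2
    refine (hasSum_le (fun n => ?_) (Ell2.hasSum_sq _) hs).trans (le_of_eq (by ring))
    rw [jacOp_apply h0]
    simp only [zero_mul, add_zero, ← sub_eq_add_neg]
    nlinarith [sq_nonneg (f (n - 1) - f (n + 1))]
  have hpos : 0 < |e| - C := by linarith [norm_nonneg (W 0), hC 0]
  have hB : ‖f‖ ≤ (|e| - C)⁻¹ * ‖jacOp (fun n => W n - e) f - jacOp (fun _ => (0 : ℝ)) f‖ := by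
    refine Ell2.norm_le_of_abs_le (by positivity) fun n => ?_
    have : (jacOp (fun n => W n - e) f - jacOp (fun _ => (0 : ℝ)) f) n = (W n - e) * f n := by
      change jacOp (fun n => W n - e) f n - jacOp (fun _ => (0 : ℝ)) f n = _
      rw [jacOp_apply h0, jacOp_apply (hW.sub_const e)]; ring
    rw [this, abs_mul, ← mul_assoc, inv_mul_eq_div]
    have h2 : |e| - C ≤ |W n - e| := by
      have := abs_sub_abs_le_abs_sub e (W n)
      rw [abs_sub_comm]; linarith [hC n]
    refine le_mul_of_one_le_left (abs_nonneg _) ?_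
    rwa [one_le_div hpos]
  rw [inv_mul_eq_div, le_div_iff₀ hpos] at hB
  have h3 := norm_sub_le (jacOp (fun n => W n - e) f) (jacOp (fun _ => (0 : ℝ)) f)
  nlinarith

lemma isClosed_spectrum {W : ℤ → ℝ} (hW : Bdd W) : IsClosed (SchrodingerSpectrum W) := by
  rw [← isOpen_compl_iff, Metric.isOpen_iff]
  intro e he
  obtain ⟨c, hc, h⟩ := (notMem_spectrum_iff hW e).1 he
  refine ⟨c, hc, fun e' he' => ?_⟩
  rw [Metric.mem_ball, Real.dist_eq] at he'
  exact (notMem_spectrum_iff hW e').2 ⟨c - |e' - e|, by linarith,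
    h.perturb (hW.sub_const e) (hW.sub_const e') fun n => le_of_eq (by congr 1; ring)⟩

lemma isCompact_spectrum {W : ℤ → ℝ} (hW : Bdd W) : IsCompact (SchrodingerSpectrum W) := by
  obtain ⟨C, hC⟩ := hW
  refine Metric.isCompact_of_isClosed_isBounded (isClosed_spectrum ⟨C, hC⟩) ?_
  refine (Metric.isBounded_closedBall (x := (0 : ℝ)) (r := C + 2)).subset fun e he => ?_
  simpa using abs_le_of_mem_spectrum hC he

/-- With empty spectrum, `H` would be bounded below by every constant. -/
lemma spectrum_nonempty {W : ℤ → ℝ} (hW : Bdd W) : (SchrodingerSpectrum W).Nonempty := by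
  by_contra hcon
  rw [not_nonempty_iff_eq_empty] at hcon
  set f : Ell2 := lp.single 2 (0 : ℤ) (1 : ℝ) with hf
  have hf1 : 0 < ‖f‖ := by
    rw [hf, lp.norm_single (by norm_num)]; norm_num
  set d := ‖jacOp (fun n => W n - 0) f‖ / ‖f‖ + 1 with hd
  have := expandsBy_of_spectrum_dist hW (e := 0) (d := d) (by positivity) (by simp [hcon]) f
  rw [hd, add_mul, div_mul_cancel₀ _ hf1.ne'] at this
  linarith

/-! ### Absence of isolated points -/

/-- Translation on `ℓ²(ℤ)`. -/
def Ell2.shift (c : ℤ) (f : Ell2) : Ell2 :=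
  ⟨fun n => f (n + c), Ell2.memℓp (hasSum_shift (Ell2.hasSum_sq f) c).summable⟩

lemma Ell2.shift_apply (c : ℤ) (f : Ell2) (n : ℤ) : Ell2.shift c f n = f (n + c) := rfl

lemma Ell2.norm_shift (c : ℤ) (f : Ell2) : ‖Ell2.shift c f‖ = ‖f‖ := by
  have h := (Ell2.hasSum_sq (Ell2.shift c f)).unique (hasSum_shift (Ell2.hasSum_sq f) c)
  exact (pow_left_inj₀ (norm_nonneg _) (norm_nonneg _) two_ne_zero).1 h

/-- Solutions of `H f = E f` form a space of dimension at most two. -/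
lemma finrank_ker_jacOp {V : ℤ → ℝ} (hV : Bdd V) :
    FiniteDimensional ℝ (LinearMap.ker (jacOp V : Ell2 →ₗ[ℝ] Ell2)) ∧
      Module.finrank ℝ (LinearMap.ker (jacOp V : Ell2 →ₗ[ℝ] Ell2)) ≤ 2 := by
  let ev : LinearMap.ker (jacOp V : Ell2 →ₗ[ℝ] Ell2) →ₗ[ℝ] (Fin 2 → ℝ) :=
    { toFun := fun f => ![(f : Ell2) 0, (f : Ell2) 1]
      map_add' := fun f g => by ext i; fin_cases i <;> rfl
      map_smul' := fun c f => by ext i; fin_cases i <;> rfl }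
  have hinj : Function.Injective ev := by
    rw [← LinearMap.ker_eq_bot, LinearMap.ker_eq_bot']
    rintro ⟨f, hf⟩ h
    have h0 : f 0 = 0 := congrFun h 0
    have h1 : f 1 = 0 := congrFun h 1
    have hrec : ∀ n, f (n - 1) + f (n + 1) + V n * f n = 0 := by
      intro n
      rw [← jacOp_apply hV]
      have : jacOp V f = 0 := hf
      rw [this]; rfl
    have hup : ∀ n : ℕ, f n = 0 ∧ f (n + 1) = 0 := by
      intro n
      induction n with
      | zero => exact ⟨h0, h1⟩
      | succ n ih =>
        push_cast
        refine ⟨ih.2, ?_⟩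
        have := hrec (n + 1)
        rw [add_sub_cancel_right, ih.1, ih.2] at this
        simpa using this
    have hdown : ∀ n : ℕ, f (-n) = 0 ∧ f (-n + 1) = 0 := by
      intro n
      induction n with
      | zero => exact ⟨h0, h1⟩
      | succ n ih =>
        have h2 := hrec (-n)
        rw [ih.1, ih.2] at h2
        have e1 : (-((n + 1 : ℕ) : ℤ)) = -n - 1 := by push_cast; ring
        rw [e1]
        refine ⟨by simpa using h2, ?_⟩
        rw [sub_add_cancel]; exact ih.1
    ext n
    obtain ⟨m, rfl | rfl⟩ := n.eq_nat_or_neg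
    · exact (hup m).1
    · exact (hdown m).1
  refine ⟨FiniteDimensional.of_injective ev hinj, ?_⟩
  simpa using LinearMap.finrank_le_finrank_of_injective hinj

/-- An operator bounded below by `r` on the orthogonal complement of an at most two-dimensional
space cannot map three orthogonal vectors of norm `m` to vectors of norm at most `r m / 2`. -/
lemma no_three_vectors {H : Type*} [NormedAddCommGroup H] [InnerProductSpace ℝ H]
    (T : H →L[ℝ] H) (K : Submodule ℝ H) [FiniteDimensional ℝ K]
    (hdim : Module.finrank ℝ K ≤ 2) {r m : ℝ} (hr : 0 < r) (hm : 0 < m)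
    (hperp : ∀ g ∈ Kᗮ, r * ‖g‖ ≤ ‖T g‖) (G : ℤ → H) (hGn : ∀ j, ‖G j‖ = m)
    (hGo : ∀ i j, i ≠ j → inner ℝ (G i) (G j) = 0) (hGT : ∀ j, ‖T (G j)‖ ≤ r / 2 * m) :
    False := by
  -- a nonzero combination orthogonal to the kernel
  let comb : (Fin 3 → ℝ) →ₗ[ℝ] H :=
    { toFun := fun a => a 0 • G 0 + a 1 • G 1 + a 2 • G 2
      map_add' := fun a b => by simp only [Pi.add_apply, add_smul]; abel
      map_smul' := fun c a => by simp [smul_smul, smul_add] }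
  have hker : LinearMap.ker ((K.orthogonalProjectionOnto : H →ₗ[ℝ] K) ∘ₗ comb) ≠ ⊥ := by
    apply LinearMap.ker_ne_bot_of_finrank_lt
    simp only [Module.finrank_fin_fun]
    omega
  obtain ⟨a, ha, ha0⟩ := (Submodule.ne_bot_iff _).1 hker
  have hu : comb a ∈ Kᗮ := by
    have : K.orthogonalProjectionOnto (comb a) = 0 := ha
    rwa [Submodule.orthogonalProjectionOnto_eq_zero_iff] at this
  have h1 := hperp _ hu
  have hc : comb a = a 0 • G 0 + a 1 • G 1 + a 2 • G 2 := rfl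
  have hn : ‖comb a‖ ^ 2 = (a 0 ^ 2 + a 1 ^ 2 + a 2 ^ 2) * m ^ 2 := by
    rw [hc, norm_add_sq_real, norm_add_sq_real]
    simp only [inner_add_left, inner_smul_left, inner_smul_right, norm_smul, hGn,
      hGo 0 1 (by norm_num), hGo 0 2 (by norm_num), hGo 1 2 (by norm_num), mul_pow,
      Real.norm_eq_abs, sq_abs]
    ring
  have hTn : ‖T (comb a)‖ ≤ (|a 0| + |a 1| + |a 2|) * (r / 2 * m) := by
    rw [hc, map_add, map_add, map_smul, map_smul, map_smul]
    refine (norm_add₃_le).trans ?_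
    rw [norm_smul, norm_smul, norm_smul, add_mul, add_mul]
    simp only [Real.norm_eq_abs]
    gcongr <;> exact hGT _
  have hA : 0 < a 0 ^ 2 + a 1 ^ 2 + a 2 ^ 2 := by
    by_contra! hneg
    apply ha0
    ext i
    fin_cases i <;> simp <;> nlinarith [sq_nonneg (a 0), sq_nonneg (a 1), sq_nonneg (a 2)]
  have h2 : (r * ‖comb a‖) ^ 2 ≤ ((|a 0| + |a 1| + |a 2|) * (r / 2 * m)) ^ 2 :=
    pow_le_pow_left₀ (by positivity) (h1.trans hTn) 2
  rw [mul_pow, hn, mul_pow, mul_pow] at h2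
  have h3 : (|a 0| + |a 1| + |a 2|) ^ 2 ≤ 3 * (a 0 ^ 2 + a 1 ^ 2 + a 2 ^ 2) := by
    rw [← sq_abs (a 0), ← sq_abs (a 1), ← sq_abs (a 2)]
    nlinarith [sq_nonneg (|a 0| - |a 1|), sq_nonneg (|a 0| - |a 2|), sq_nonneg (|a 1| - |a 2|)]
  have hrg : 0 < r ^ 2 * m ^ 2 := by positivity
  have h4 := mul_le_mul_of_nonneg_right h3 hrg.le
  have h5 : 0 < (a 0 ^ 2 + a 1 ^ 2 + a 2 ^ 2) * (r ^ 2 * m ^ 2) := by positivity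
  nlinarith

/-- The spectrum of a bounded potential with arbitrarily good almost-periods has no isolated
points.  At an isolated point `E` the operator `T = H - E` would be bounded below on the
orthogonal complement of its at most two-dimensional kernel; but three far translates of one
compactly supported approximate eigenvector have a nonzero combination in that complement. -/
lemma preperfect_spectrum {W : ℤ → ℝ} (hW : Bdd W)
    (hap : ∀ ε > 0, ∃ q : ℤ, 0 < q ∧ ∀ j n : ℤ, |W n - W (n + j * q)| ≤ ε) :
    Preperfect (SchrodingerSpectrum W) := by
  rw [preperfect_iff_nhds]
  by_contra! hcon
  obtain ⟨e, he, U, hU, hiso⟩ := hcon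
  obtain ⟨ρ, hρ, hball⟩ := Metric.mem_nhds_iff.1 hU
  have hgap : ∀ t ∈ SchrodingerSpectrum W, t ≠ e → ρ ≤ |t - e| := by
    intro t ht hne
    by_contra! hlt
    exact hne (hiso t ⟨hball (by simpa [Real.dist_eq] using hlt), ht⟩)
  set r := ρ / 2 with hr
  have hr0 : 0 < r := by positivity
  have hV := hW.sub_const e
  set T := jacOp (fun n => W n - e) with hTdef
  have hTsymm := jacOp_symm hV
  have hiso' : ∀ t : ℝ, |t| ≤ r → ∀ f : Ell2, |t| * ‖f‖ ≤ ‖T f - t • f‖ := by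
    intro t ht f
    rcases eq_or_ne t 0 with rfl | ht0
    · simp
    have h2 : T f - t • f = jacOp (fun n => W n - (e + t)) f := by
      apply lp.ext
      funext n
      change T f n - t * f n = _
      rw [hTdef, jacOp_apply (hW.sub_const _), jacOp_apply (hW.sub_const _)]
      ring
    rw [h2]
    refine expandsBy_of_spectrum_dist hW (abs_pos.2 ht0) (fun s hs => ?_) f
    rcases eq_or_ne s e with rfl | hse
    · rw [sub_add_cancel_left, abs_neg]
    · have h3 := hgap s hs hse
      have h4 : |s - e| ≤ |s - (e + t)| + |t| := by
        have := abs_add_le (s - (e + t)) t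
        rwa [show s - (e + t) + t = s - e by ring] at this
      linarith
  have hrange := expands_range hTsymm hr0 hiso'
  have hperp := fun {g : Ell2} hg => expands_ker_orthogonal hTsymm hrange (g := g) hg
  obtain ⟨hfin, hdim⟩ := finrank_ker_jacOp hV
  rw [← hTdef] at hfin hdim hperp
  set ε := r / 4 with hε
  have hε0 : 0 < ε := by positivity
  -- a finitely supported approximate eigenvector
  obtain ⟨g, N, hg, hgN⟩ : ∃ (g : Ell2) (N : ℕ), ‖T g‖ < ε * ‖g‖ ∧ ∀ n : ℤ, N < |n| → g n = 0 := by
    have h1 : ∃ f, ‖T f‖ < ε * ‖f‖ := by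
      by_contra! hno
      exact (notMem_spectrum_iff hW e).2 ⟨ε, hε0, hno⟩ he
    obtain ⟨f, hf⟩ := h1
    have hopen : IsOpen {g : Ell2 | ‖T g‖ < ε * ‖g‖} := isOpen_lt (by fun_prop) (by fun_prop)
    have hs := lp.hasSum_single (p := 2) (by norm_num) f
    obtain ⟨s, hs⟩ := (hs.eventually (hopen.mem_nhds hf)).exists
    refine ⟨_, s.sup Int.natAbs, hs, fun n hn => ?_⟩
    rw [lp.coeFn_sum, Finset.sum_apply]
    refine Finset.sum_eq_zero fun i hi => ?_
    have : i ≠ n := by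
      rintro rfl
      have := Finset.le_sup (f := Int.natAbs) hi
      rw [Int.abs_eq_natAbs] at hn
      omega
    rw [lp.single_apply_ne]
    exact this.symm
  have hgpos : 0 < ‖g‖ := by
    by_contra! h0
    have : ‖g‖ = 0 := le_antisymm h0 (norm_nonneg _)
    rw [this, mul_zero] at hg
    exact absurd hg (not_lt.2 (norm_nonneg _))
  obtain ⟨q, hq, hqW⟩ := hap ε hε0
  set G : ℤ → Ell2 := fun j => Ell2.shift (j * (2 * N + 1) * q) g with hG
  have hGn : ∀ j, ‖G j‖ = ‖g‖ := fun j => Ell2.norm_shift _ _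
  have hGT : ∀ j, ‖T (G j)‖ ≤ 2 * ε * ‖g‖ := by
    intro j
    set c := j * (2 * N + 1) * q with hc
    have h1 : ‖T (G j) - Ell2.shift c (T g)‖ ≤ ε * ‖G j‖ := by
      refine Ell2.norm_le_of_abs_le hε0.le fun n => ?_
      have : (T (G j) - Ell2.shift c (T g)) n = (W n - W (n + c)) * G j n := by
        change T (G j) n - T g (n + c) = _
        rw [hTdef, jacOp_apply hV, jacOp_apply hV]
        simp only [hG, Ell2.shift_apply, ← hc]
        rw [show n - 1 + c = n + c - 1 by ring, show n + 1 + c = n + c + 1 by ring]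
        ring
      rw [this, abs_mul]
      exact mul_le_mul_of_nonneg_right (hqW _ n) (abs_nonneg _)
    have h2 := norm_sub_norm_le (T (G j)) (Ell2.shift c (T g))
    rw [Ell2.norm_shift] at h2
    rw [hGn] at h1
    linarith
  have hGo : ∀ i j, i ≠ j → inner ℝ (G i) (G j) = 0 := by
    intro i j hij
    rw [lp.inner_eq_tsum]
    refine (tsum_congr fun n => ?_).trans tsum_zero
    simp only [hG, Ell2.shift_apply]
    by_cases h1 : (N : ℤ) < |n + i * (2 * N + 1) * q|
    · rw [hgN _ h1]; simp
    · by_cases h2 : (N : ℤ) < |n + j * (2 * N + 1) * q|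
      · rw [hgN _ h2]; simp
      · exfalso
        push Not at h1 h2
        have h3 : |(i - j) * ((2 * N + 1) * q)| ≤ 2 * N := by
          have := abs_sub (n + i * (2 * N + 1) * q) (n + j * (2 * N + 1) * q)
          rw [show n + i * (2 * N + 1) * q - (n + j * (2 * N + 1) * q)
            = (i - j) * ((2 * N + 1) * q) by ring] at this
          linarith
        rw [abs_mul] at h3
        have h4 : 1 ≤ |i - j| := Int.one_le_abs (sub_ne_zero.2 hij)
        have h5 : 2 * (N : ℤ) + 1 ≤ |(2 * (N : ℤ) + 1) * q| := by
          rw [abs_of_pos (by positivity)]; nlinarith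
        nlinarith
  exact no_three_vectors T _ hdim hr0 hgpos (fun g hg => hperp hg) G hGn hGo fun j => by
    have := hGT j
    rwa [show 2 * ε = r / 2 by rw [hε]; ring] at this

/-! ### Exponential decay inside a gap -/

/-- The mass `∑ g n` over the window of radius `s` around `c`. -/
def win (g : ℤ → ℝ) (c : ℤ) (s : ℕ) : ℝ := ∑ n ∈ Finset.Icc (c - s) (c + s), g n

lemma win_succ (g : ℤ → ℝ) (c : ℤ) (s : ℕ) :
    win g c (s + 1) = win g c s + g (c - s - 1) + g (c + s + 1) := by
  unfold win
  have : Finset.Icc (c - (s + 1 : ℕ)) (c + (s + 1 : ℕ))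
      = insert (c - s - 1) (insert (c + s + 1) (Finset.Icc (c - s) (c + s))) := by
    ext n
    simp only [Finset.mem_Icc, Finset.mem_insert]
    push_cast
    omega
  rw [this, Finset.sum_insert, Finset.sum_insert]
  · ring
  · simp only [Finset.mem_Icc]; omega
  · simp only [Finset.mem_Icc, Finset.mem_insert]; omega

lemma win_mono_radius {g : ℤ → ℝ} (hg : ∀ n, 0 ≤ g n) (c : ℤ) {s t : ℕ} (h : s ≤ t) :
    win g c s ≤ win g c t := by
  unfold win
  refine Finset.sum_le_sum_of_subset_of_nonneg (fun n => ?_) fun n _ _ => hg n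
  simp only [Finset.mem_Icc]
  omega

lemma win_nonneg {g : ℤ → ℝ} (hg : ∀ n, 0 ≤ g n) (c : ℤ) (s : ℕ) : 0 ≤ win g c s :=
  Finset.sum_nonneg fun n _ => hg n

/-- Testing the lower bound of `H_V` against the truncation of `f` to a window on which the
potentials `U` and `V` agree; the truncation error lives on the two edges of the window. -/
lemma window_step {V U : ℤ → ℝ} (hV : Bdd V) {d : ℝ} (hd : 0 ≤ d) (hexp : ExpandsBy (jacOp V) d)
    (f : ℤ → ℝ) (c : ℤ) (s : ℕ)
    (hUV : ∀ n, |n - c| ≤ s + 1 → U n = V n) :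
    d ^ 2 * win (fun n => f n ^ 2) c (s + 1) ≤ 2 * win (fun n => (jac U f n) ^ 2) c (s + 1)
      + 2 * (win (fun n => f n ^ 2) c (s + 2) - win (fun n => f n ^ 2) c s) := by
  set I := Finset.Icc (c - (s + 1 : ℕ)) (c + (s + 1 : ℕ)) with hI
  have hmem : ∀ n, n ∈ I ↔ c - s - 1 ≤ n ∧ n ≤ c + s + 1 := by
    intro n; rw [hI, Finset.mem_Icc]; push_cast; omega
  have hind : ∀ h : ℤ → ℝ, HasSum (fun n => if n ∈ I then h n else 0) (∑ n ∈ I, h n) := by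
    intro h
    have h1 : HasSum (fun n => if n ∈ I then h n else 0) (∑ n ∈ I, if n ∈ I then h n else 0) :=
      hasSum_sum_of_ne_finset_zero (fun n hn => by simp [hn])
    rwa [Finset.sum_congr rfl (fun n hn => if_pos hn)] at h1
  have hg2 : HasSum (fun n => (if n ∈ I then f n else 0) ^ 2) (∑ n ∈ I, f n ^ 2) := by
    have h1 := hind fun n => f n ^ 2
    have h2 : (fun n => (if n ∈ I then f n else 0) ^ 2)
        = fun n => if n ∈ I then f n ^ 2 else 0 := by
      funext n; split_ifs <;> simp
    rwa [h2]
  set g : Ell2 := ⟨fun n => if n ∈ I then f n else 0, Ell2.memℓp hg2.summable⟩ with hg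
  have hga : ∀ n, g n = if n ∈ I then f n else 0 := fun n => rfl
  have hgn : ‖g‖ ^ 2 = ∑ n ∈ I, f n ^ 2 := (Ell2.hasSum_sq g).unique hg2
  have h1 := pow_le_pow_left₀ (by positivity) (hexp g) 2
  rw [mul_pow, hgn] at h1
  have hb := fun (b : ℤ) (a : ℝ) => hasSum_ite_eq b a
  have hS := ((hind fun n => (jac U f n) ^ 2).mul_left 2).add
    (((((hb (c - s - 1) (f (c - s - 2) ^ 2)).add (hb (c + s + 1) (f (c + s + 2) ^ 2))).add
      (hb (c - s - 2) (f (c - s - 1) ^ 2))).add (hb (c + s + 2) (f (c + s + 1) ^ 2))).mul_left 2)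
  have h2 := hasSum_le (fun n => ?_) (Ell2.hasSum_sq (jacOp V g)) hS
  · have e1 := win_succ (fun n => f n ^ 2) c (s + 1)
    have e2 := win_succ (fun n => f n ^ 2) c s
    push_cast at e1
    rw [show c - ((s : ℤ) + 1) - 1 = c - s - 2 by ring,
      show c + ((s : ℤ) + 1) + 1 = c + s + 2 by ring] at e1
    have e3 : win (fun n => f n ^ 2) c (s + 1) = ∑ n ∈ I, f n ^ 2 := rfl
    have e4 : win (fun n => (jac U f n) ^ 2) c (s + 1) = ∑ n ∈ I, (jac U f n) ^ 2 := rfl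
    rw [e3, e4]
    have e1' : win (fun n => f n ^ 2) c (s + 2) = win (fun n => f n ^ 2) c (s + 1)
      + f (c - s - 2) ^ 2 + f (c + s + 2) ^ 2 := e1
    linarith
  · rw [jacOp_apply hV, hga, hga, hga]
    have hsq : ∀ x y : ℝ, (x - y) ^ 2 ≤ 2 * x ^ 2 + 2 * y ^ 2 := fun x y => by
      nlinarith [sq_nonneg (x + y)]
    by_cases hn : n ∈ I
    · have hUn : U n = V n := hUV n (by
        have := (hmem n).1 hn
        rw [abs_le]; constructor <;> linarith)
      have hn' := (hmem n).1 hn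
      have h0 : n ≠ c - s - 2 := by omega
      have h0' : n ≠ c + s + 2 := by omega
      simp only [hn, if_true, h0, h0', if_false]
      have hj : jac U f n = f (n - 1) + f (n + 1) + V n * f n := by unfold jac; rw [hUn]
      by_cases hl : n = c - s - 1
      · have m1 : n - 1 ∉ I := by rw [hmem]; omega
        have m2 : n + 1 ∈ I := by rw [hmem]; omega
        have m3 : n ≠ c + s + 1 := by omega
        simp only [m1, m2, m3, if_false, if_true]
        rw [if_pos hl, show c - s - 2 = n - 1 by omega]
        have := hsq (jac U f n) (f (n - 1))
        rw [hj] at this ⊢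
        rw [show f (n - 1) + f (n + 1) + V n * f n - f (n - 1) = 0 + f (n + 1) + V n * f n
          by ring] at this
        linarith
      · by_cases hr : n = c + s + 1
        · have m1 : n - 1 ∈ I := by rw [hmem]; omega
          have m2 : n + 1 ∉ I := by rw [hmem]; omega
          simp only [m1, m2, hl, if_false, if_true]
          rw [if_pos hr, show c + s + 2 = n + 1 by omega]
          have := hsq (jac U f n) (f (n + 1))
          rw [hj] at this ⊢
          rw [show f (n - 1) + f (n + 1) + V n * f n - f (n + 1) = f (n - 1) + 0 + V n * f n
            by ring] at this
          linarith
        · have m1 : n - 1 ∈ I := by rw [hmem]; omega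
          have m2 : n + 1 ∈ I := by rw [hmem]; omega
          simp only [m1, m2, hl, hr, if_false, if_true]
          rw [hj]
          nlinarith [sq_nonneg (f (n - 1) + f (n + 1) + V n * f n)]
    · have hn' := (hmem n).not.1 hn
      have h0 : n ≠ c - s - 1 := by omega
      have h0' : n ≠ c + s + 1 := by omega
      simp only [hn, if_false, h0, h0']
      by_cases hl : n = c - s - 2
      · have m1 : n - 1 ∉ I := by rw [hmem]; omega
        have m2 : n + 1 ∈ I := by rw [hmem]; omega
        have m3 : n ≠ c + s + 2 := by omega
        simp only [m1, m2, m3, if_false, if_true]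
        rw [if_pos hl, show c - s - 1 = n + 1 by omega]
        nlinarith [sq_nonneg (f (n + 1))]
      · by_cases hr : n = c + s + 2
        · have m1 : n - 1 ∈ I := by rw [hmem]; omega
          have m2 : n + 1 ∉ I := by rw [hmem]; omega
          simp only [m1, m2, hl, if_false, if_true]
          rw [if_pos hr, show c + s + 1 = n - 1 by omega]
          nlinarith [sq_nonneg (f (n - 1))]
        · have m1 : n - 1 ∉ I := by rw [hmem]; omega
          have m2 : n + 1 ∉ I := by rw [hmem]; omega
          simp [m1, m2, hl, hr]

/-- The decay rate attached to a lower bound `d`. -/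
def rate (d : ℝ) : ℝ := 2 / (2 + d ^ 2)

lemma rate_pos (d : ℝ) : 0 < rate d := by unfold rate; positivity

lemma rate_le_one (d : ℝ) : rate d ≤ 1 := by
  unfold rate; rw [div_le_one (by positivity)]; nlinarith [sq_nonneg d]

/-- Iterated `window_step`: near the centre of a window where `U` agrees with a potential whose
operator is bounded below, `f` is exponentially small up to the error `jac U f`. -/
lemma window_decay {V U : ℤ → ℝ} (hV : Bdd V) {d : ℝ} (hd : 0 ≤ d) (hexp : ExpandsBy (jacOp V) d)
    (f : ℤ → ℝ) (c : ℤ) (M : ℕ) (hUV : ∀ n, |n - c| ≤ 2 * M + 1 → U n = V n) :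
    win (fun n => f n ^ 2) c 1 ≤ rate d ^ M * win (fun n => f n ^ 2) c (2 * M + 1)
      + M * win (fun n => (jac U f n) ^ 2) c (2 * M + 1) := by
  have hf : ∀ n, 0 ≤ f n ^ 2 := fun n => sq_nonneg _
  have hj : ∀ n, 0 ≤ (jac U f n) ^ 2 := fun n => sq_nonneg _
  have step : ∀ s : ℕ, s ≤ 2 * M → win (fun n => f n ^ 2) c s ≤
      rate d * (win (fun n => f n ^ 2) c (s + 2) + win (fun n => (jac U f n) ^ 2) c (s + 1)) := by
    intro s hs
    have h1 := window_step hV hd hexp f c s (fun n hn => hUV n (hn.trans (by omega)))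
    have h2 := win_mono_radius hf c (Nat.le_succ s)
    have h3 := mul_le_mul_of_nonneg_left h2 (sq_nonneg d)
    unfold rate
    rw [div_mul_eq_mul_div, le_div_iff₀ (by positivity)]
    simp only [Nat.succ_eq_add_one] at h3
    linarith
  have hr0 := rate_pos d
  have hr1 := rate_le_one d
  have main : ∀ m : ℕ, m ≤ M → win (fun n => f n ^ 2) c 1 ≤
      rate d ^ m * win (fun n => f n ^ 2) c (2 * m + 1)
      + m * win (fun n => (jac U f n) ^ 2) c (2 * M + 1) := by
    intro m
    induction m with
    | zero => intro _; simp
    | succ m ih =>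
      intro hm
      have h1 := ih (by omega)
      have h2 := step (2 * m + 1) (by omega)
      have h3 := win_mono_radius hj c (show 2 * m + 1 + 1 ≤ 2 * M + 1 by omega)
      have h4 : rate d ^ m * win (fun n => f n ^ 2) c (2 * m + 1) ≤ rate d ^ m * (rate d *
        (win (fun n => f n ^ 2) c (2 * m + 1 + 2) + win (fun n => (jac U f n) ^ 2) c (2 * M + 1))) := by
        gcongr
        exact h2.trans (by gcongr)
      have h5 : rate d ^ m * rate d * win (fun n => (jac U f n) ^ 2) c (2 * M + 1)
          ≤ win (fun n => (jac U f n) ^ 2) c (2 * M + 1) := by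
        refine mul_le_of_le_one_left (win_nonneg hj _ _) ?_
        rw [← pow_succ]; exact pow_le_one₀ hr0.le hr1
      rw [show 2 * (m + 1) + 1 = 2 * m + 1 + 2 by ring]
      push_cast
      rw [pow_succ]
      linarith
  exact main M le_rfl

/-! ### Cutting a periodic operator into boxes -/

lemma sum_fin_eq_Ico (g : ℤ → ℝ) (a : ℤ) (p : ℕ) :
    ∑ i : Fin p, g (a + (i : ℕ)) = ∑ n ∈ Finset.Ico a (a + p), g n := by
  rw [Fin.sum_univ_eq_sum_range (fun i : ℕ => g (a + i)) p]
  induction p with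
  | zero => simp
  | succ p ih =>
    have : Finset.Ico a (a + (p + 1 : ℕ)) = insert (a + p) (Finset.Ico a (a + p)) := by
      ext n; simp only [Finset.mem_Ico, Finset.mem_insert]; push_cast; omega
    rw [Finset.sum_range_succ, ih, this, Finset.sum_insert (by simp), add_comm]

lemma hasSum_blocks {g : ℤ → ℝ} {a : ℝ} (hg : HasSum g a) (c : ℤ) {p : ℕ} (hp : 0 < p) :
    HasSum (fun b : ℤ => ∑ i : Fin p, g (c + b * p + (i : ℕ))) a := by
  have : NeZero p := ⟨hp.ne'⟩
  have h1 := hasSum_shift hg c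
  have h2 := (Int.divModEquiv p).symm.hasSum_iff.2 h1
  have h3 := h2.prod_fiberwise (g := fun b : ℤ => ∑ i : Fin p, g (c + b * p + (i : ℕ)))
    fun b => by
      have h4 := hasSum_fintype fun i : Fin p => g (c + b * p + (i : ℕ))
      refine (congrArg (fun F : Fin p → ℝ => HasSum F _) (funext fun i => ?_)).mpr h4
      simp only [Function.comp, Int.divModEquiv_symm_apply]
      congr 1
      ring
  exact h3

lemma sum_fin_ite (p : ℕ) (m : ℤ) (h : ℤ → ℝ) :
    ∑ j : Fin p, (if ((j : ℕ) : ℤ) = m then h (j : ℕ) else 0)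
      = if 0 ≤ m ∧ m < p then h m else 0 := by
  split_ifs with hm
  · rw [Finset.sum_eq_single (⟨m.toNat, by omega⟩ : Fin p)]
    · have : ((m.toNat : ℕ) : ℤ) = m := by omega
      simp [this]
    · intro j _ hj
      rw [if_neg]
      intro hjm
      apply hj
      ext
      simp only
      omega
    · simp
  · refine Finset.sum_eq_zero fun j _ => ?_
    rw [if_neg]
    have := j.2
    omega

/-- The `p` eigenvalues of the Dirichlet restriction of a `p`-periodic operator to a box
`[c + 1, c + p]`.  They serve all translates of the box by multiples of `p`. -/
lemma exists_box_eigenvalues {W : ℤ → ℝ} {p : ℕ} (hper : ∀ b n : ℤ, W (n + b * p) = W n) (c : ℤ) :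
    ∃ ev : Fin p → ℝ, ∀ e η : ℝ, 0 ≤ η → (∀ i, η ≤ (ev i - e) ^ 2) → ∀ (f : ℤ → ℝ) (b : ℤ),
      η * ∑ i : Fin p, f (c + 1 + b * p + (i : ℕ)) ^ 2 ≤
        2 * ∑ i : Fin p, (jac (fun n => W n - e) f (c + 1 + b * p + (i : ℕ))) ^ 2
          + 4 * f (c + b * p) ^ 2 + 4 * f (c + (b + 1) * p + 1) ^ 2 := by
  let A : Matrix (Fin p) (Fin p) ℝ := Matrix.of fun i j =>
    (if ((j : ℕ) : ℤ) = (i : ℕ) - 1 then 1 else 0) + (if ((j : ℕ) : ℤ) = (i : ℕ) + 1 then 1 else 0)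
      + (if ((j : ℕ) : ℤ) = (i : ℕ) then W (c + 1 + (i : ℕ)) else 0)
  have hA : A.IsHermitian := by
    ext i j
    simp only [A, Matrix.conjTranspose_apply, Matrix.of_apply, star_trivial]
    by_cases h1 : i = j
    · subst h1; rfl
    · have h2 : ¬ ((i : ℕ) : ℤ) = (j : ℕ) := fun h => h1 (Fin.ext (by exact_mod_cast h))
      have h3 : ¬ ((j : ℕ) : ℤ) = (i : ℕ) := fun h => h2 h.symm
      have h4 : ((i : ℕ) : ℤ) = (j : ℕ) - 1 ↔ ((j : ℕ) : ℤ) = (i : ℕ) + 1 := by omega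
      have h5 : ((i : ℕ) : ℤ) = (j : ℕ) + 1 ↔ ((j : ℕ) : ℤ) = (i : ℕ) - 1 := by omega
      simp only [h2, h3, h4, h5, if_false]
      ring
  have hsymm := Matrix.isSymmetric_toEuclideanLin_iff.2 hA
  obtain ⟨ev, hev⟩ := exists_eigenvalues (by simp) _ hsymm (n := p)
  refine ⟨ev, fun e η hη h f b => ?_⟩
  set a := c + 1 + b * p with ha
  set u : EuclideanSpace ℝ (Fin p) := WithLp.toLp 2 fun i => f (a + (i : ℕ)) with hu
  have h1 := hev e η hη h u
  rw [EuclideanSpace.norm_sq_eq, EuclideanSpace.norm_sq_eq] at h1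
  have hval : ∀ i : Fin p, (Matrix.toEuclideanLin A u - e • u) i =
      jac (fun n => W n - e) f (a + (i : ℕ)) - ((if (i : ℕ) = 0 then f (c + b * p) else 0)
        + (if (i : ℕ) + 1 = p then f (c + (b + 1) * p + 1) else 0)) := by
    intro i
    have hi := i.2
    have e1 : Matrix.toEuclideanLin A u i = ∑ j : Fin p, A i j * f (a + (j : ℕ)) := by
      rfl
    have e2 : ∑ j : Fin p, A i j * f (a + (j : ℕ)) =
        (∑ j : Fin p, (if ((j : ℕ) : ℤ) = (i : ℕ) - 1 then f (a + (j : ℕ)) else 0))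
        + (∑ j : Fin p, (if ((j : ℕ) : ℤ) = (i : ℕ) + 1 then f (a + (j : ℕ)) else 0))
        + ∑ j : Fin p, (if ((j : ℕ) : ℤ) = (i : ℕ) then
            W (c + 1 + (i : ℕ)) * f (a + (j : ℕ)) else 0) := by
      rw [← Finset.sum_add_distrib, ← Finset.sum_add_distrib]
      refine Finset.sum_congr rfl fun j _ => ?_
      simp only [A, Matrix.of_apply, add_mul, ite_mul, one_mul, zero_mul]
    have s1 := sum_fin_ite p ((i : ℕ) - 1) (fun m : ℤ => f (a + m))
    have s2 := sum_fin_ite p ((i : ℕ) + 1) (fun m : ℤ => f (a + m))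
    have s3 := sum_fin_ite p (i : ℕ) (fun m : ℤ => W (c + 1 + (i : ℕ)) * f (a + m))
    beta_reduce at s1 s2 s3
    rw [s1, s2, s3] at e2
    have hWp : W (a + (i : ℕ)) = W (c + 1 + (i : ℕ)) := by
      rw [← hper b (c + 1 + (i : ℕ)), ha]; congr 1; ring
    have e3 : (Matrix.toEuclideanLin A u - e • u) i
      = Matrix.toEuclideanLin A u i - e * f (a + (i : ℕ)) := rfl
    rw [e3, e1, e2, if_pos (⟨by omega, by omega⟩ : (0 : ℤ) ≤ ((i : ℕ) : ℤ) ∧ ((i : ℕ) : ℤ) < p)]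
    unfold jac
    simp only [hWp]
    have l1 : (if (0 : ℤ) ≤ ((i : ℕ) : ℤ) - 1 ∧ ((i : ℕ) : ℤ) - 1 < p then
        f (a + (((i : ℕ) : ℤ) - 1)) else 0) =
        f (a + (i : ℕ) - 1) - (if (i : ℕ) = 0 then f (c + b * p) else 0) := by
      by_cases hi0 : (i : ℕ) = 0
      · rw [if_neg (by omega), if_pos hi0, ha, hi0]
        rw [show c + 1 + b * p + ((0 : ℕ) : ℤ) - 1 = c + b * p by push_cast; ring]; ring
      · rw [if_pos (by omega), if_neg hi0, sub_zero]; congr 1; ring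
    have l2 : (if (0 : ℤ) ≤ ((i : ℕ) : ℤ) + 1 ∧ ((i : ℕ) : ℤ) + 1 < p then
        f (a + (((i : ℕ) : ℤ) + 1)) else 0) =
        f (a + (i : ℕ) + 1) - (if (i : ℕ) + 1 = p then f (c + (b + 1) * p + 1) else 0) := by
      by_cases hi0 : (i : ℕ) + 1 = p
      · rw [if_neg (by omega), if_pos hi0, ha]
        have : ((i : ℕ) : ℤ) = p - 1 := by omega
        rw [this]
        rw [show c + 1 + b * p + ((p : ℤ) - 1) + 1 = c + (b + 1) * p + 1 by ring]; ring
      · rw [if_pos (by omega), if_neg hi0, sub_zero]; congr 1; ring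
    rw [l1, l2]
    ring
  have h2 : ∑ i : Fin p, ‖(Matrix.toEuclideanLin A u - e • u) i‖ ^ 2 ≤
      ∑ i : Fin p, (2 * (jac (fun n => W n - e) f (a + (i : ℕ))) ^ 2
        + 4 * (if ((i : ℕ) : ℤ) = 0 then f (c + b * p) ^ 2 else 0)
        + 4 * (if ((i : ℕ) : ℤ) = p - 1 then f (c + (b + 1) * p + 1) ^ 2 else 0)) := by
    refine Finset.sum_le_sum fun i _ => ?_
    rw [hval i, Real.norm_eq_abs, sq_abs]
    have c1 : (((i : ℕ) : ℤ) = 0) ↔ (i : ℕ) = 0 := by omega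
    have c2 : (((i : ℕ) : ℤ) = p - 1) ↔ (i : ℕ) + 1 = p := by omega
    simp only [c1, c2]
    set x := jac (fun n => W n - e) f (a + (i : ℕ))
    have gen : ∀ y z : ℝ, (x - (y + z)) ^ 2 ≤ 2 * x ^ 2 + 4 * y ^ 2 + 4 * z ^ 2 := fun y z => by
      nlinarith [sq_nonneg (x + y + z), sq_nonneg (y - z)]
    refine (gen _ _).trans (le_of_eq ?_)
    split_ifs <;> ring
  have s1 := sum_fin_ite p 0 (fun _ : ℤ => f (c + b * p) ^ 2)
  have s2 := sum_fin_ite p (p - 1) (fun _ : ℤ => f (c + (b + 1) * p + 1) ^ 2)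
  beta_reduce at s1 s2
  rw [Finset.sum_add_distrib, Finset.sum_add_distrib, ← Finset.mul_sum, ← Finset.mul_sum,
    ← Finset.mul_sum, s1, s2] at h2
  have h3 : ∀ (P : Prop) [Decidable P] (x : ℝ), (if P then x ^ 2 else 0) ≤ x ^ 2 := by
    intro P _ x; split_ifs
    · exact le_rfl
    · positivity
  have h4 := h3 ((0 : ℤ) ≤ 0 ∧ (0 : ℤ) < p) (f (c + b * p))
  have h5 := h3 ((0 : ℤ) ≤ p - 1 ∧ (p : ℤ) - 1 < p) (f (c + (b + 1) * p + 1))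
  have h6 : ∑ i : Fin p, ‖u i‖ ^ 2 = ∑ i : Fin p, f (a + (i : ℕ)) ^ 2 := by
    refine Finset.sum_congr rfl fun i _ => ?_
    rw [Real.norm_eq_abs, sq_abs]
  rw [h6] at h1
  linarith

/-- If a `p`-periodic potential `W` agrees near `c + pℤ` with a potential `V` whose operator has
a gap around `e`, then a spectral value `e` of `H_W` is exponentially close to one of at most
`p` numbers depending on `W` and `c` only. -/
lemma spectrum_near_eigenvalue {W : ℤ → ℝ} (hW : Bdd W) {p : ℕ} (hp : 0 < p)
    (hper : ∀ b n : ℤ, W (n + b * p) = W n) (c : ℤ) :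
    ∃ ev : Fin p → ℝ, ∀ (V : ℤ → ℝ) (M : ℕ), Bdd V → 4 * M + 3 ≤ p →
      (∀ b n : ℤ, |n - (c + b * p)| ≤ 2 * M + 1 → W n = V n) →
      ∀ e d : ℝ, 0 ≤ d → ExpandsBy (jacOp fun n => V n - e) d → e ∈ SchrodingerSpectrum W →
        ∃ i, (ev i - e) ^ 2 ≤ 8 * rate d ^ M := by
  obtain ⟨ev, hev⟩ := exists_box_eigenvalues hper c
  refine ⟨ev, fun V M hV hM hWV e d hd hexp he => ?_⟩
  by_contra! hcon
  have : Nonempty (Fin p) := ⟨⟨0, hp⟩⟩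
  obtain ⟨i0, hi0⟩ := Finite.exists_min fun i => (ev i - e) ^ 2
  set η := (ev i0 - e) ^ 2 with hη
  have hη8 : 8 * rate d ^ M < η := hcon i0
  set κ := (η - 8 * rate d ^ M) / (2 + 8 * M) with hκ
  have hκ0 : 0 < κ := by
    apply div_pos <;> [linarith; positivity]
  refine (notMem_spectrum_iff hW e).2 ⟨Real.sqrt κ, Real.sqrt_pos.2 hκ0, fun f => ?_⟩ he
  rw [← pow_le_pow_iff_left₀ (by positivity) (norm_nonneg _) two_ne_zero, mul_pow,
    Real.sq_sqrt hκ0.le]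
  set U : ℤ → ℝ := fun n => W n - e with hU
  have hUb : Bdd U := hW.sub_const e
  have sf := Ell2.hasSum_sq f
  have sψ : HasSum (fun n => (jac U f n) ^ 2) (‖jacOp U f‖ ^ 2) := by
    have := Ell2.hasSum_sq (jacOp U f)
    simpa only [jac, jacOp_apply hUb] using this
  have t1 := (hasSum_blocks sf (c + 1) hp).mul_left η
  have t2 := (hasSum_blocks sψ (c + 1) hp).mul_left 2
  have t3 := hasSum_blocks sf (c - (2 * M + 1)) hp
  have t4 := hasSum_blocks sψ (c - (2 * M + 1)) hp
  have t5 := (t3.mul_left (rate d ^ M)).add (t4.mul_left (M : ℝ))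
  have t6 := hasSum_shift t5 1
  have key := hasSum_le (fun b => ?_) t1 (t2.add ((t5.mul_left 4).add (t6.mul_left 4)))
  · rw [hκ, div_mul_eq_mul_div, div_le_iff₀ (by positivity)]
    linarith
  · have hwin : ∀ (g : ℤ → ℝ) (_ : ∀ n, 0 ≤ g n) (b : ℤ), win g (c + b * p) (2 * M + 1) ≤
        ∑ i : Fin p, g (c - (2 * M + 1) + b * p + (i : ℕ)) := by
      intro g hg b
      rw [sum_fin_eq_Ico]
      refine Finset.sum_le_sum_of_subset_of_nonneg (fun n => ?_) fun n _ _ => hg n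
      simp only [Finset.mem_Icc, Finset.mem_Ico]
      push_cast
      generalize b * (p : ℤ) = B
      omega
    have hdec : ∀ b : ℤ, win (fun n => f n ^ 2) (c + b * p) 1 ≤
        rate d ^ M * ∑ i : Fin p, f (c - (2 * M + 1) + b * p + (i : ℕ)) ^ 2
        + M * ∑ i : Fin p, (jac U f (c - (2 * M + 1) + b * p + (i : ℕ))) ^ 2 := by
      intro b
      have h1 := window_decay (hV.sub_const e) hd hexp f (c + b * p) M (U := U)
        (fun n hn => by simp only [hU]; rw [hWV b n hn])
      have h2 := hwin (fun n => f n ^ 2) (fun n => sq_nonneg _) b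
      have h3 := hwin (fun n => (jac U f n) ^ 2) (fun n => sq_nonneg _) b
      refine h1.trans (add_le_add ?_ ?_)
      · exact mul_le_mul_of_nonneg_left h2 (pow_nonneg (rate_pos d).le _)
      · exact mul_le_mul_of_nonneg_left h3 (by positivity)
    have hbox := hev e η (sq_nonneg _) hi0 f b
    have d1 := hdec b
    have d2 := hdec (b + 1)
    have w1 : f (c + b * p) ^ 2 ≤ win (fun n => f n ^ 2) (c + b * p) 1 :=
      Finset.single_le_sum (f := fun n => f n ^ 2) (fun n _ => sq_nonneg _)
        (by simp only [Finset.mem_Icc]; push_cast; omega)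
    have w2 : f (c + (b + 1) * p + 1) ^ 2 ≤ win (fun n => f n ^ 2) (c + (b + 1) * p) 1 :=
      Finset.single_le_sum (f := fun n => f n ^ 2) (fun n _ => sq_nonneg _)
        (by simp only [Finset.mem_Icc]; push_cast; omega)
    linarith

/-! ### Aggregated potentials -/

lemma agg_eq {k : ℕ} (hk : 0 < k) (x : ℤ → (Fin k → ℝ)) (n : ℤ) (h : (n % (k : ℤ)).toNat < k) :
    agg k x n = x (n / k) ⟨(n % (k : ℤ)).toNat, h⟩ := by
  unfold agg
  rw [dif_pos hk, Int.fdiv_eq_ediv_of_nonneg _ (by positivity)]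

lemma toNat_emod_lt {k : ℕ} (hk : 0 < k) (n : ℤ) : (n % (k : ℤ)).toNat < k := by
  have h1 : 0 ≤ n % (k : ℤ) := Int.emod_nonneg n (by exact_mod_cast hk.ne')
  have h2 : n % (k : ℤ) < (k : ℤ) := Int.emod_lt_of_pos n (by exact_mod_cast hk)
  omega

lemma agg_congr {k : ℕ} (hk : 0 < k) {x x' : ℤ → (Fin k → ℝ)} {n : ℤ}
    (h : x (n / k) = x' (n / k)) : agg k x n = agg k x' n := by
  rw [agg_eq hk x n (toNat_emod_lt hk n), agg_eq hk x' n (toNat_emod_lt hk n), h]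

lemma abs_agg_sub_le {k : ℕ} (hk : 0 < k) {x x' : ℤ → (Fin k → ℝ)} {ε : ℝ}
    (h : ∀ j, dist (x j) (x' j) ≤ ε) (n : ℤ) : |agg k x n - agg k x' n| ≤ ε := by
  rw [agg_eq hk x n (toNat_emod_lt hk n), agg_eq hk x' n (toNat_emod_lt hk n), ← Real.dist_eq]
  exact (dist_le_pi_dist _ _ _).trans (h _)

lemma abs_agg_le {k : ℕ} (hk : 0 < k) {x : ℤ → (Fin k → ℝ)} {C : ℝ}
    (h : ∀ j, ‖x j‖ ≤ C) (n : ℤ) : |agg k x n| ≤ C := by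
  rw [agg_eq hk x n (toNat_emod_lt hk n), ← Real.norm_eq_abs]
  exact (norm_le_pi_norm _ _).trans (h _)

lemma bdd_agg {k : ℕ} (hk : 0 < k) (x : ℤ →ᵇ (Fin k → ℝ)) : Bdd (agg k x) :=
  ⟨‖x‖, abs_agg_le hk x.norm_coe_le_norm⟩

lemma agg_periodic {k : ℕ} (hk : 0 < k) {x : ℤ → (Fin k → ℝ)} {q : ℕ}
    (h : ∀ j : ℤ, x (j + q) = x j) (b n : ℤ) : agg k x (n + b * (q * k : ℕ)) = agg k x n := by
  have hper : Function.Periodic x (q : ℤ) := h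
  have hk' : (k : ℤ) ≠ 0 := by exact_mod_cast hk.ne'
  have e1 : n + b * (q * k : ℕ) = n + (b * q) * k := by push_cast; ring
  rw [agg_eq hk x n (toNat_emod_lt hk n), agg_eq hk x _ (toNat_emod_lt hk _)]
  have e2 : (n + b * (q * k : ℕ)) / (k : ℤ) = n / k + b * q := by
    rw [e1, Int.add_mul_ediv_right _ _ hk']
  have e3 : (n + b * (q * k : ℕ)) % (k : ℤ) = n % k := by
    rw [e1, Int.add_mul_emod_self_right]
  have e4 : x (n / k + b * q) = x (n / k) := by
    have := hper.int_mul b (n / k)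
    simpa using this
  rw [e2, e4]
  congr 2
  rw [e3]

/-- A limit-periodic sequence has arbitrarily good uniform almost periods, all of whose multiples
are equally good; hence its spectrum has no isolated points. -/
lemma preperfect_of_mem_LPY {k : ℕ} (hk : 0 < k) {Y : Set (Fin k → ℝ)} {y : ℤ →ᵇ (Fin k → ℝ)}
    (hy : y ∈ LPY k Y) : Preperfect (SchrodingerSpectrum (agg k y)) := by
  refine preperfect_spectrum (bdd_agg hk y) fun ε hε => ?_
  obtain ⟨x, ⟨⟨q, hq, hper⟩, -⟩, hx⟩ := Metric.mem_closure_iff.1 hy (ε / 2) (by positivity)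
  have hd : ∀ n, |agg k y n - agg k x n| ≤ ε / 2 :=
    abs_agg_sub_le hk fun j => (dist_coe_le_dist j).trans hx.le
  refine ⟨(q * k : ℕ), by exact_mod_cast Nat.mul_pos hq hk, fun j n => ?_⟩
  have h1 := hd n
  have h2 := hd (n + j * (q * k : ℕ))
  rw [agg_periodic hk hper j n] at h2
  rw [abs_le] at *
  constructor <;> linarith

/-! ### Finite covers and Hausdorff dimension -/

/-- `A` is covered by finitely many open intervals with centres `c.1` and radii `c.2`, whose
lengths raised to the power `s` sum to less than `η`. -/
def Covers (s η : ℝ) (A : Set ℝ) : Prop :=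
  ∃ F : Finset (ℝ × ℝ), (∀ c ∈ F, 0 < c.2) ∧ A ⊆ ⋃ c ∈ F, Metric.ball c.1 c.2 ∧
    ∑ c ∈ F, (2 * c.2) ^ s < η

lemma Covers.of_points {ι : Type*} [Fintype ι] {s η ρ : ℝ} {A : Set ℝ} (hρ : 0 < ρ) (c : ι → ℝ)
    (h : ∀ e ∈ A, ∃ i, |c i - e| < ρ) (hη : Fintype.card ι * (2 * ρ) ^ s < η) :
    Covers s η A := by
  classical
  refine ⟨Finset.univ.image fun i => (c i, ρ), ?_, ?_, ?_⟩
  · intro x hx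
    obtain ⟨i, -, rfl⟩ := Finset.mem_image.1 hx
    exact hρ
  · intro e he
    obtain ⟨i, hi⟩ := h e he
    simp only [mem_iUnion]
    refine ⟨(c i, ρ), Finset.mem_image_of_mem _ (Finset.mem_univ i), ?_⟩
    rw [Metric.mem_ball, dist_comm, Real.dist_eq]
    exact hi
  · refine lt_of_le_of_lt ?_ hη
    rw [Finset.sum_congr rfl (g := fun _ => (2 * ρ) ^ s)]
    · rw [Finset.sum_const, nsmul_eq_mul]
      gcongr
      exact Finset.card_image_le
    · intro x hx
      obtain ⟨i, -, rfl⟩ := Finset.mem_image.1 hx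
      rfl

lemma Covers.union {s η₁ η₂ : ℝ} {A B C : Set ℝ} (hA : Covers s η₁ A) (hB : Covers s η₂ B)
    (hC : C ⊆ A ∪ B) : Covers s (η₁ + η₂) C := by
  classical
  obtain ⟨F, hF, hAF, hFs⟩ := hA
  obtain ⟨G, hG, hBG, hGs⟩ := hB
  refine ⟨F ∪ G, ?_, ?_, ?_⟩
  · intro c hc
    rcases Finset.mem_union.1 hc with h | h
    exacts [hF c h, hG c h]
  · intro e he
    rcases hC he with h | h
    · have := hAF h
      simp only [mem_iUnion] at this ⊢
      obtain ⟨c, hc, h2⟩ := this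
      exact ⟨c, Finset.mem_union_left _ hc, h2⟩
    · have := hBG h
      simp only [mem_iUnion] at this ⊢
      obtain ⟨c, hc, h2⟩ := this
      exact ⟨c, Finset.mem_union_right _ hc, h2⟩
  · have h1 := Finset.sum_union_inter (s₁ := F) (s₂ := G) (f := fun c : ℝ × ℝ => (2 * c.2) ^ s)
    have h2 : 0 ≤ ∑ c ∈ F ∩ G, (2 * c.2) ^ s := Finset.sum_nonneg fun c hc => by
      have := hF c (Finset.mem_inter.1 hc).1
      positivity
    linarith

/-- The diameters in the `n`-th cover are at most `1 / (n + 1)`, so for every fixed exponent `s > 0`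
and large `n` the sums of their `s`-th powers are below `1 / (n + 1)`; hence the Hausdorff
measure of every positive dimension is finite. -/
lemma dimH_eq_zero_of_covers {A : Set ℝ}
    (h : ∀ n : ℕ, Covers (1 / ((n : ℝ) + 1)) (1 / ((n : ℝ) + 1)) A) : dimH A = 0 := by
  choose F hF hAF hFs using h
  have hlen : ∀ n : ℕ, ∀ c ∈ F n, 2 * c.2 < 1 / ((n : ℝ) + 1) := by
    intro n c hc
    have hn : (0 : ℝ) < (n : ℝ) + 1 := by positivity
    have hs1 : 1 / ((n : ℝ) + 1) ≤ 1 := by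
      rw [div_le_one hn]; linarith [(Nat.cast_nonneg n : (0 : ℝ) ≤ n)]
    have hc0 := hF n c hc
    have h1 : (2 * c.2) ^ (1 / ((n : ℝ) + 1)) < 1 / ((n : ℝ) + 1) :=
      (Finset.single_le_sum (f := fun c : ℝ × ℝ => (2 * c.2) ^ (1 / ((n : ℝ) + 1)))
        (fun c hc => by have := hF n c hc; positivity) hc).trans_lt (hFs n)
    have h2 : 2 * c.2 < 1 := by
      by_contra! h3
      exact absurd (Real.one_le_rpow h3 (by positivity)) (not_le.2 (h1.trans_le hs1))
    refine lt_of_le_of_lt ?_ h1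
    conv_lhs => rw [← Real.rpow_one (2 * c.2)]
    exact Real.rpow_le_rpow_of_exponent_ge (by positivity) h2.le hs1
  have key : ∀ d : NNReal, 0 < d → dimH A ≤ d := by
    intro d hd
    refine dimH_le_of_hausdorffMeasure_ne_top (ne_top_of_le_ne_top ENNReal.one_ne_top ?_)
    have hdiam : ∀ c : ℝ × ℝ, Metric.ediam (Metric.ball c.1 c.2) ≤ ENNReal.ofReal (2 * c.2) := by
      intro c
      rw [Real.ball_eq_Ioo, Real.ediam_Ioo]
      exact ENNReal.ofReal_le_ofReal (by linarith)
    have hlim : Filter.Tendsto (fun n : ℕ => 1 / ((n : ℝ) + 1)) Filter.atTop (nhds 0) :=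
      tendsto_one_div_add_atTop_nhds_zero_nat
    refine (Measure.hausdorffMeasure_le_liminf_sum (ι := fun n => (F n : Type)) (d : ℝ) A
      (l := Filter.atTop) (fun n : ℕ => ENNReal.ofReal (1 / ((n : ℝ) + 1))) ?_
      (fun n c => Metric.ball c.1.1 c.1.2) ?_ ?_).trans ?_
    · rw [← ENNReal.ofReal_zero]
      exact (ENNReal.continuous_ofReal.tendsto 0).comp hlim
    · exact Filter.Eventually.of_forall fun n c =>
        (hdiam c.1).trans (ENNReal.ofReal_le_ofReal (hlen n c.1 c.2).le)
    · refine Filter.Eventually.of_forall fun n e he => ?_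
      have := hAF n he
      simp only [mem_iUnion] at this ⊢
      obtain ⟨c, hc, h2⟩ := this
      exact ⟨⟨c, hc⟩, h2⟩
    · have hev : ∀ᶠ n : ℕ in Filter.atTop,
          ∑ c : F n, Metric.ediam (Metric.ball c.1.1 c.1.2) ^ (d : ℝ) ≤ 1 := by
        filter_upwards [hlim.eventually (gt_mem_nhds (show (0 : ℝ) < d by exact_mod_cast hd))]
          with n hn
        have hn1 : 1 / ((n : ℝ) + 1) ≤ 1 := by
          rw [div_le_one (by positivity)]; linarith [(Nat.cast_nonneg n : (0 : ℝ) ≤ n)]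
        have h1 : ∀ c : F n, Metric.ediam (Metric.ball c.1.1 c.1.2) ^ (d : ℝ)
            ≤ ENNReal.ofReal ((2 * c.1.2) ^ (1 / ((n : ℝ) + 1))) := by
          intro c
          have hc0 := hF n c.1 c.2
          refine (ENNReal.rpow_le_rpow (hdiam c.1) d.2).trans ?_
          rw [ENNReal.ofReal_rpow_of_pos (by positivity)]
          refine ENNReal.ofReal_le_ofReal ?_
          exact Real.rpow_le_rpow_of_exponent_ge (by positivity)
            ((hlen n c.1 c.2).le.trans hn1) hn.le
        refine (Finset.sum_le_sum fun c _ => h1 c).trans ?_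
        rw [← ENNReal.ofReal_sum_of_nonneg
          (fun c _ => by have := hF n c.1 c.2; positivity), ← ENNReal.ofReal_one]
        refine ENNReal.ofReal_le_ofReal ?_
        rw [Finset.sum_coe_sort (F n) (fun c : ℝ × ℝ => (2 * c.2) ^ (1 / ((n : ℝ) + 1)))]
        exact (hFs n).le.trans hn1
      refine (Filter.liminf_le_liminf hev).trans ?_
      simp
  refine le_antisymm ?_ bot_le
  refine ENNReal.le_of_forall_pos_le_add fun ε hε _ => ?_
  simpa using key ε hε

lemma interior_eq_empty_of_dimH_eq_zero {A : Set ℝ} (h : dimH A = 0) : interior A = ∅ := by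
  by_contra hne
  have := Real.dimH_of_nonempty_interior (nonempty_iff_ne_empty.2 hne)
  rw [h] at this
  simp at this

/-- Covers by open intervals persist under small perturbations of the potential. -/
lemma covers_stable {k : ℕ} (hk : 0 < k) {s η : ℝ} {y : ℤ →ᵇ (Fin k → ℝ)}
    (h : Covers s η (SchrodingerSpectrum (agg k y))) :
    ∃ δ > 0, ∀ y' : ℤ →ᵇ (Fin k → ℝ), dist y' y < δ →
      Covers s η (SchrodingerSpectrum (agg k y')) := by
  obtain ⟨F, hF, hAF, hFs⟩ := h
  obtain ⟨δ, hδ, hsub⟩ := (isCompact_spectrum (bdd_agg hk y)).exists_thickening_subset_open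
    (isOpen_biUnion fun c _ => Metric.isOpen_ball) hAF
  refine ⟨δ, hδ, fun y' hy' => ⟨F, hF, fun e he => hsub ?_, hFs⟩⟩
  obtain ⟨t, ht, hte⟩ := exists_spectrum_near (bdd_agg hk y) (bdd_agg hk y')
    (abs_agg_sub_le hk fun j => dist_coe_le_dist (f := y) (g := y') j)
    (by rwa [dist_comm]) he
  refine Metric.mem_thickening_iff.2 ⟨t, ht, ?_⟩
  rwa [dist_comm, Real.dist_eq]

/-! ### Pasting long blocks of potentials with gaps -/

lemma perExt_eq {α : Type*} [Zero α] {m : ℕ} (hm : 0 < m) (w : Fin m → α) (j : ℤ) :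
    perExt w j = w ⟨(j % (m : ℤ)).toNat, toNat_emod_lt hm j⟩ := by
  unfold perExt
  rw [dif_pos hm]

/-- Gap-richness, phrased for periodic sequences instead of words. -/
lemma exists_gap_near {k : ℕ} {Y : Set (Fin k → ℝ)} {S : Set ℝ}
    (hGR : GapRich k Y S) {x : ℤ →ᵇ (Fin k → ℝ)} (hx : x ∈ PerY k Y) {ε : ℝ} (hε : 0 < ε)
    {E : ℝ} (hE : E ∉ S) :
    ∃ (l : ℕ) (y : ℤ → (Fin k → ℝ)), 0 < l ∧ (∀ j : ℤ, y (j + l) = y j) ∧ (∀ j, y j ∈ Y) ∧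
      (∀ j, dist (x j) (y j) ≤ ε) ∧ E ∉ SchrodingerSpectrum (agg k y) := by
  obtain ⟨⟨q, hq, hper⟩, hxY⟩ := hx
  obtain ⟨l, hl, y, hyY, hd, hEy⟩ := hGR.2 E hE q hq (fun i => x ((i : ℕ) : ℤ))
    (fun i => hxY _) ε hε
  refine ⟨l, perExt y, hl, fun j => ?_, fun j => ?_, fun j => ?_, hEy⟩
  · rw [perExt_eq hl, perExt_eq hl]
    congr 2
    simp
  · rw [perExt_eq hl]; exact hyY _
  · have h1 := (hd j).le
    have h2 : perExt (fun i : Fin q => x ((i : ℕ) : ℤ)) j = x j := by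
      rw [perExt_eq hq]
      have hq' : (q : ℤ) ≠ 0 := by exact_mod_cast hq.ne'
      simp only [Int.toNat_of_nonneg (Int.emod_nonneg j hq')]
      have hP : Function.Periodic x (q : ℤ) := hper
      have h3 := hP.int_mul (j / q) (j % q)
      rw [← h3]
      congr 1
      have := Int.emod_add_mul_ediv j q
      simp only [Int.cast_id]
      linarith
    rwa [h2] at h1

/-- The sequence following `y i` on the `i`-th of `m` consecutive blocks of length `L`,
repeated periodically. -/
def paste {α : Type*} (y : ℕ → ℤ → α) (m L : ℕ) (j : ℤ) : α :=
  y ((j / (L : ℤ)) % (m : ℤ)).toNat j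

lemma paste_periodic {α : Type*} {y : ℕ → ℤ → α} {m L Q N : ℕ} (hm : 0 < m) (hL : L = Q * N)
    (hL0 : 0 < L) (hper : ∀ i < m, ∀ j : ℤ, y i (j + Q) = y i j) (j : ℤ) :
    paste y m L (j + (m * L : ℕ)) = paste y m L j := by
  have hL' : (L : ℤ) ≠ 0 := by exact_mod_cast hL0.ne'
  unfold paste
  have e1 : (j + (m * L : ℕ)) / (L : ℤ) = j / L + m := by
    push_cast
    rw [Int.add_mul_ediv_right _ _ hL']
  rw [e1, Int.add_emod_right]
  have hP : Function.Periodic (y ((j / (L : ℤ)) % (m : ℤ)).toNat) (Q : ℤ) :=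
    hper _ (toNat_emod_lt hm _)
  have h3 := hP.int_mul (m * N) j
  rw [← h3]
  congr 1
  rw [hL]
  push_cast
  ring

lemma paste_eq {α : Type*} (y : ℕ → ℤ → α) {m L i : ℕ} (hL0 : 0 < L) (hi : i < m) {b j : ℤ}
    (h1 : (b * m + i) * L ≤ j) (h2 : j < (b * m + i + 1) * L) : paste y m L j = y i j := by
  have hL' : (0 : ℤ) < L := by exact_mod_cast hL0
  unfold paste
  have e1 : j / (L : ℤ) = i + b * m := by
    rw [Int.ediv_eq_iff_of_pos hL']
    constructor <;> nlinarith
  rw [e1, Int.add_mul_emod_self_right, Int.emod_eq_of_lt (by positivity) (by exact_mod_cast hi)]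
  simp

/-- For large `M`, linear growth of the number of intervals loses against their exponential
smallness. -/
lemma exists_large_block {θ s η : ℝ} (hθ0 : 0 < θ) (hθ : θ < 1) (hs : 0 < s) (hη : 0 < η) (C : ℕ) :
    ∃ M : ℕ, ((C * (4 * M + 5) : ℕ) : ℝ) * (2 * (3 * (Real.sqrt θ) ^ M)) ^ s < η := by
  set τ := (Real.sqrt θ) ^ s with hτ
  have hq0 : 0 < Real.sqrt θ := Real.sqrt_pos.2 hθ0
  have hq1 : Real.sqrt θ < 1 := by
    rw [← Real.sqrt_one]; exact Real.sqrt_lt_sqrt hθ0.le hθ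
  have hτ0 : 0 < τ := by positivity
  have hτ1 : τ < 1 := Real.rpow_lt_one hq0.le hq1 hs
  have t1 := (tendsto_self_mul_const_pow_of_lt_one hτ0.le hτ1).const_mul (4 * C * (6 : ℝ) ^ s)
  have t2 := (tendsto_pow_atTop_nhds_zero_of_lt_one hτ0.le hτ1).const_mul (5 * C * (6 : ℝ) ^ s)
  have t3 := t1.add t2
  rw [mul_zero, mul_zero, add_zero] at t3
  obtain ⟨M, hM⟩ := (t3.eventually (gt_mem_nhds hη)).exists
  refine ⟨M, lt_of_eq_of_lt ?_ hM⟩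
  rw [show 2 * (3 * (Real.sqrt θ) ^ M) = 6 * (Real.sqrt θ) ^ M by ring,
    Real.mul_rpow (by norm_num) (by positivity), ← Real.rpow_natCast, ← Real.rpow_mul hq0.le,
    mul_comm (M : ℝ) s, Real.rpow_mul hq0.le, Real.rpow_natCast]
  push_cast
  ring

/-- Pasting long blocks of finitely many periodic sequences produces a periodic sequence whose
spectrum is very thin at all energies lying in a gap of one of them. -/
lemma exists_paste {k : ℕ} (hk : 0 < k) {y : ℕ → ℤ → (Fin k → ℝ)} {m Q : ℕ} (hm : 0 < m)
    (hQ : 0 < Q) (hper : ∀ i < m, ∀ j : ℤ, y i (j + Q) = y i j) {C : ℝ}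
    (hC : ∀ i < m, ∀ j, ‖y i j‖ ≤ C) {d s η : ℝ} (hd : 0 < d) (hs : 0 < s) (hη : 0 < η) :
    ∃ (q : ℕ) (z : ℤ → (Fin k → ℝ)), 0 < q ∧ (∀ j : ℤ, z (j + q) = z j) ∧
      (∀ j, ∃ i < m, z j = y i j) ∧
      Covers s η (SchrodingerSpectrum (agg k z) ∩
        {e | ∃ i < m, ExpandsBy (jacOp fun n => agg k (y i) n - e) d}) := by
  have hθ0 := rate_pos d
  have hθ1 : rate d < 1 := by
    unfold rate; rw [div_lt_one (by positivity)]; nlinarith [sq_pos_of_pos hd]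
  obtain ⟨M, hM⟩ := exists_large_block hθ0 hθ1 hs hη (m * (m * Q * k))
  set L := Q * (4 * M + 5) with hL
  have hL0 : 0 < L := by positivity
  have hLM : 4 * M + 5 ≤ L := Nat.le_mul_of_pos_left _ hQ
  have hz : ∀ j, ∃ i < m, paste y m L j = y i j := fun j => ⟨_, toNat_emod_lt hm _, rfl⟩
  have hzper := paste_periodic hm hL hL0 hper
  refine ⟨m * L, paste y m L, Nat.mul_pos hm hL0, hzper, hz, ?_⟩
  have hW : Bdd (agg k (paste y m L)) := ⟨C, abs_agg_le hk fun j => by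
    obtain ⟨i, hi, h⟩ := hz j
    rw [h]; exact hC i hi j⟩
  have hp : 0 < m * L * k := Nat.mul_pos (Nat.mul_pos hm hL0) hk
  have hWper := agg_periodic hk hzper
  choose ev hev using fun i : Fin m =>
    spectrum_near_eigenvalue hW hp hWper (((i : ℕ) : ℤ) * L * k + 2 * M + 2)
  refine Covers.of_points (ι := Fin m × Fin (m * L * k)) (ρ := 3 * (Real.sqrt (rate d)) ^ M)
    (by have := Real.sqrt_pos.2 hθ0; positivity) (fun x => ev x.1 x.2) ?_ ?_
  · rintro e ⟨he, i, hi, hexp⟩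
    have hpM : 4 * M + 3 ≤ m * L * k := by
      have h1 : L ≤ m * L := Nat.le_mul_of_pos_left _ hm
      have h2 : m * L ≤ m * L * k := Nat.le_mul_of_pos_right _ hk
      omega
    have hWV : ∀ b n : ℤ, |n - ((i : ℤ) * L * k + 2 * M + 2 + b * (m * L * k : ℕ))| ≤ 2 * M + 1 →
        agg k (paste y m L) n = agg k (y i) n := by
      intro b n hn
      apply agg_congr hk
      have hk' : (0 : ℤ) < k := by exact_mod_cast hk
      rw [abs_le] at hn
      push_cast at hn
      -- the block offset `u` of `n` satisfies `1 ≤ u ≤ 4 M + 3 < L`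
      obtain ⟨u, hu⟩ : ∃ u : ℤ, u = n - ((b * m + i) * L) * k := ⟨_, rfl⟩
      have e0 : (b * m + i) * L * k = (i : ℤ) * L * k + b * (m * L * k) := by ring
      have hu1 : 1 ≤ u := by linarith [hn.1]
      have hu2 : u ≤ 4 * M + 3 := by linarith [hn.2]
      have hnk : n / (k : ℤ) = u / k + (b * m + i) * L := by
        rw [← Int.add_mul_ediv_right _ _ hk'.ne']; congr 1; linarith
      have hu3 : 0 ≤ u / (k : ℤ) := Int.ediv_nonneg (by linarith) hk'.le
      have hu4 : u / (k : ℤ) ≤ u := Int.ediv_le_self _ (by linarith)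
      have hLM' : (4 * M + 5 : ℤ) ≤ L := by exact_mod_cast hLM
      refine paste_eq y hL0 hi (b := b) ?_ ?_
      · rw [hnk]; linarith
      · rw [hnk]; nlinarith
    obtain ⟨a, ha⟩ := hev ⟨i, hi⟩ (agg k (y i)) M ⟨C, abs_agg_le hk (hC i hi)⟩ hpM hWV e d
      hd.le hexp he
    refine ⟨(⟨i, hi⟩, a), ?_⟩
    refine abs_lt_of_sq_lt_sq (ha.trans_lt ?_) (by positivity)
    rw [mul_pow, ← pow_mul, mul_comm M 2, pow_mul, Real.sq_sqrt hθ0.le]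
    have := pow_pos hθ0 M
    linarith
  · refine lt_of_eq_of_lt ?_ hM
    rw [Fintype.card_prod, Fintype.card_fin, Fintype.card_fin]
    congr 2
    rw [hL]; ring

/-! ### Density of thin spectra -/

lemma IsDiscreteSet.finite_inter {S K : Set ℝ} (hS : IsDiscreteSet S) (hK : IsCompact K) :
    (S ∩ K).Finite := by
  by_contra hinf
  obtain ⟨x, -, hx⟩ := Set.Infinite.exists_accPt_of_subset_isCompact hinf hK inter_subset_right
  exact hS x (hx.mono (Filter.principal_mono.2 inter_subset_left))

/-- Near any periodic sequence there is, for each energy `E`, a periodic sequence with a gap of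
quantified size around `E`; for exceptional `E` nothing is claimed about the gap. -/
lemma exists_quantified_gap {k : ℕ} (hk : 0 < k) {Y : Set (Fin k → ℝ)} {S : Set ℝ}
    (hGR : GapRich k Y S) {x : ℤ →ᵇ (Fin k → ℝ)} (hx : x ∈ PerY k Y) {ε : ℝ} (hε : 0 < ε) (E : ℝ) :
    ∃ (l : ℕ) (y : ℤ → (Fin k → ℝ)) (d : ℝ), 0 < l ∧ (∀ j : ℤ, y (j + l) = y j) ∧
      (∀ j, y j ∈ Y) ∧ (∀ j, dist (x j) (y j) ≤ ε) ∧ 0 < d ∧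
      (E ∉ S → ∀ e, |e - E| < d → ExpandsBy (jacOp fun n => agg k y n - e) d) := by
  by_cases hE : E ∈ S
  · obtain ⟨⟨q, hq, hper⟩, hxY⟩ := hx
    exact ⟨q, x, 1, hq, hper, hxY, fun j => by simpa using hε.le, one_pos, fun h => absurd hE h⟩
  · obtain ⟨l, y, hl, hper, hyY, hd, hEy⟩ := exists_gap_near hGR hx hε hE
    have hb : Bdd (agg k y) := ⟨‖x‖ + ε, abs_agg_le hk fun j => by
      have h1 := hd j
      rw [dist_comm, dist_eq_norm] at h1
      have h2 := norm_le_norm_add_norm_sub' (y j) (x j)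
      have h3 := x.norm_coe_le_norm j
      linarith⟩
    obtain ⟨c, hc, hexp⟩ := (notMem_spectrum_iff hb E).1 hEy
    refine ⟨l, y, c / 2, hl, hper, hyY, hd, by positivity, fun _ e he => ?_⟩
    have := ExpandsBy.perturb (hb.sub_const E) (hb.sub_const e) hexp (ε := c / 2) (fun n => by
      rw [show agg k y n - E - (agg k y n - e) = e - E by ring]; exact he.le)
    rwa [show c - c / 2 = c / 2 by ring] at this

lemma exists_small_radius {s η : ℝ} (hs : 0 < s) (hη : 0 < η) (N : ℕ) :
    ∃ δ > 0, N * (2 * δ) ^ s < η := by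
  refine ⟨(η / (N + 1)) ^ (1 / s) / 2, by positivity, ?_⟩
  rw [mul_div_cancel₀ _ (two_ne_zero), ← Real.rpow_mul (by positivity), one_div_mul_cancel hs.ne',
    Real.rpow_one, mul_div_assoc', div_lt_iff₀ (by positivity)]
  nlinarith

/-- Near any periodic sequence over `Y` there is one with arbitrarily thin spectrum.  By
compactness, finitely many nearby periodic sequences have gaps that together contain every energy
of a bounded interval outside a small neighbourhood of `S`.  Pasting them makes the spectrum thin
at these energies; the finitely many exceptional energies are covered by small intervals. -/
lemma exists_covers_near {k : ℕ} (hk : 0 < k) {Y : Set (Fin k → ℝ)} {S : Set ℝ}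
    (hGR : GapRich k Y S) {x : ℤ →ᵇ (Fin k → ℝ)} (hx : x ∈ PerY k Y) {ε s η : ℝ} (hε : 0 < ε)
    (hs : 0 < s) (hη : 0 < η) :
    ∃ z ∈ PerY k Y, dist x z ≤ ε ∧ Covers s η (SchrodingerSpectrum (agg k z)) := by
  classical
  set K := Icc (-(‖x‖ + ε + 2)) (‖x‖ + ε + 2) with hK
  have hKc : IsCompact K := isCompact_Icc
  have hfin := hGR.1.finite_inter hKc
  have := hfin.fintype
  obtain ⟨δ, hδ, hδs⟩ := exists_small_radius hs (half_pos hη) (Fintype.card ↥(S ∩ K))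
  choose l y d hl hper hyY hxy hd hgap using exists_quantified_gap hk hGR hx hε
  have hyC : ∀ E j, ‖y E j‖ ≤ ‖x‖ + ε := by
    intro E j
    have h1 := hxy E j
    rw [dist_comm, dist_eq_norm] at h1
    have h2 := norm_le_norm_add_norm_sub' (y E j) (x j)
    have h3 := x.norm_coe_le_norm j
    linarith
  obtain ⟨t, htK, htc⟩ := hKc.elim_nhds_subcover
    (fun E => Metric.ball E (if E ∈ S then δ else d E))
    (fun E _ => Metric.ball_mem_nhds _ (by split_ifs <;> [exact hδ; exact hd E]))
  -- enumerate the energies of the subcover; the value `0` pads the list to keep it nonempty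
  set g : ℕ → ℝ := fun i => t.toList.getD i 0 with hg
  set m := t.card + 1 with hm
  have hgt : ∀ E ∈ t, ∃ i < m, g i = E := by
    intro E hE
    obtain ⟨i, hi, h⟩ := List.getElem_of_mem (Finset.mem_toList.2 hE)
    rw [Finset.length_toList] at hi
    exact ⟨i, by omega, by simp [hg, List.getD, h, hi]⟩
  set Q := ∏ i ∈ Finset.range m, l (g i) with hQ
  have hQ0 : 0 < Q := Finset.prod_pos fun i _ => hl _
  have hQper : ∀ i < m, ∀ j : ℤ, y (g i) (j + Q) = y (g i) j := by
    intro i hi j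
    obtain ⟨c, hc⟩ := Finset.dvd_prod_of_mem (fun i => l (g i)) (Finset.mem_range.2 hi)
    have hP : Function.Periodic (y (g i)) (l (g i) : ℤ) := hper (g i)
    have h3 := hP.int_mul c j
    rw [← h3, hQ, hc]
    congr 1
    push_cast
    ring
  obtain ⟨i0, hi0, hmin⟩ := Finset.exists_min_image (Finset.range m) (fun i => d (g i))
    ⟨0, Finset.mem_range.2 (by omega)⟩
  obtain ⟨q, z, hq, hzper, hzy, hcov⟩ := exists_paste hk (y := fun i => y (g i)) (m := m)
    (by omega) hQ0 hQper (fun i _ j => hyC _ _) (hd (g i0)) hs (half_pos hη)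
  have hzC : ∀ j, ‖z j‖ ≤ ‖x‖ + ε := fun j => by
    obtain ⟨i, -, h⟩ := hzy j
    rw [h]; exact hyC _ _
  refine ⟨BoundedContinuousFunction.ofNormedAddCommGroup z continuous_of_discreteTopology _ hzC,
    ⟨⟨q, hq, hzper⟩, fun j => ?_⟩, (dist_le hε.le).2 fun j => ?_, ?_⟩
  · obtain ⟨i, -, h⟩ := hzy j
    change z j ∈ Y
    rw [h]; exact hyY _ _
  · obtain ⟨i, -, h⟩ := hzy j
    change dist (x j) (z j) ≤ ε
    rw [h]; exact hxy _ _
  · change Covers s η (SchrodingerSpectrum (agg k z))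
    have hcS : Covers s (η / 2) (⋃ E ∈ S ∩ K, Metric.ball E δ) := by
      refine Covers.of_points hδ (fun E : ↥(S ∩ K) => (E : ℝ)) (fun e he => ?_) hδs
      simp only [mem_iUnion] at he
      obtain ⟨E, hE, h⟩ := he
      refine ⟨⟨E, hE⟩, ?_⟩
      rwa [Metric.mem_ball, dist_comm, Real.dist_eq] at h
    rw [← add_halves η]
    refine hcS.union hcov fun e he => ?_
    have heK : e ∈ K := by
      rw [hK, mem_Icc, ← abs_le]
      exact abs_le_of_mem_spectrum (abs_agg_le hk hzC) he
    have h1 := htc heK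
    simp only [mem_iUnion] at h1
    obtain ⟨E, hEt, hE⟩ := h1
    by_cases hES : E ∈ S
    · left
      rw [if_pos hES] at hE
      simp only [mem_iUnion]
      exact ⟨E, ⟨hES, htK E hEt⟩, hE⟩
    · right
      rw [if_neg hES, Metric.mem_ball, Real.dist_eq] at hE
      obtain ⟨i, hi, rfl⟩ := hgt E hEt
      refine ⟨he, i, hi, fun f => ?_⟩
      refine le_trans ?_ (hgap (g i) hES e hE f)
      exact mul_le_mul_of_nonneg_right (hmin i (Finset.mem_range.2 hi)) (norm_nonneg _)

/-! ### The generic set -/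

/-- If `Y ⊆ ℝ^k` is a closed perfect gap-rich set, then for generic
`y ∈ LP(ℤ,Y)` the spectrum of `H_y` is a Cantor set of zero Hausdorff dimension. -/
theorem gapRich_generic_zero_dim_cantor (k : ℕ) (hk : 0 < k)
    (Y : Set (Fin k → ℝ)) (hY : Perfect Y) (S : Set ℝ) (hGR : GapRich k Y S) :
    ∃ R : Set (LPY k Y), IsGδ R ∧ Dense R ∧
      ∀ y ∈ R,
        IsZeroDimCantor
          (SchrodingerSpectrum (agg k ⇑(y : ℤ →ᵇ (Fin k → ℝ)))) := by
  let U : ℕ → Set (LPY k Y) := fun n =>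
    {y | Covers (1 / ((n : ℝ) + 1)) (1 / ((n : ℝ) + 1))
      (SchrodingerSpectrum (agg k ⇑(y : ℤ →ᵇ (Fin k → ℝ))))}
  have hopen : ∀ n, IsOpen (U n) := by
    intro n
    rw [Metric.isOpen_iff]
    intro y hy
    obtain ⟨δ, hδ, h⟩ := covers_stable hk hy
    exact ⟨δ, hδ, fun y' hy' => h y' hy'⟩
  have hdense : ∀ n, Dense (U n) := by
    intro n
    rw [Metric.dense_iff]
    intro y r hr
    obtain ⟨x, hx, hyx⟩ := Metric.mem_closure_iff.1 y.2 (r / 2) (by positivity)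
    obtain ⟨z, hz, hxz, hcov⟩ := exists_covers_near hk hGR hx (ε := r / 3)
      (s := 1 / ((n : ℝ) + 1)) (η := 1 / ((n : ℝ) + 1)) (by positivity) (by positivity)
      (by positivity)
    refine ⟨⟨z, subset_closure hz⟩, ?_, hcov⟩
    rw [Metric.mem_ball, dist_comm, Subtype.dist_eq]
    have := dist_triangle (y : ℤ →ᵇ (Fin k → ℝ)) x z
    change dist (y : ℤ →ᵇ (Fin k → ℝ)) z < r
    linarith
  have hcomplete : CompleteSpace (LPY k Y) := (isClosed_closure (s := PerY k Y)).completeSpace_coe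
  refine ⟨⋂ n, U n, IsGδ.iInter_of_isOpen hopen, dense_iInter_of_isOpen hopen hdense,
    fun y hy => ?_⟩
  have hb := bdd_agg hk (y : ℤ →ᵇ (Fin k → ℝ))
  have hdim := dimH_eq_zero_of_covers fun n => mem_iInter.1 hy n
  exact ⟨spectrum_nonempty hb, isCompact_spectrum hb, preperfect_of_mem_LPY hk y.2,
    interior_eq_empty_of_dimH_eq_zero hdim, hdim⟩
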